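/- arXiv:2408.03037 — 2 statements merged into one kernel-verified Lean document; each statement's English description precedes it below -/
import Mathlib

section
/- Characterization of the achievable cost region for causal encoding and causal decoding (Theorem 1): A pair of Witsenhausen costs (P,S) ∈ ℝ² is achievable by control designs with causal encoder and causal decoder if and only if there exists a joint probability distribution of random variables (X_0, T, U_1, X_1, Y_1, U_2), where T takes values in a set of cardinality at most 2, which decomposes as P_{X_0} P_T P_{U_1|X_0,T} P_{X_1,Y_1|X_0,U_1} P_{U_2|T,Y_1} (i.e., X_0 is independent of T, the conditional law of (X_1,Y_1) given (X_0,U_1,T) is the Witsenhausen channel depending only on (X_0,U_1), and U_2 is conditionally independent of (X_0,U_1,X_1) given (T,Y_1)), such that P = E[U_1²] and S = E[(X_1 − U_2)²]. -/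
/-!
Formalization of results from "Causal Vector-valued Witsenhausen Counterexamples with
Feedback" (Zhao, Le Treust, Oechtering).

Stochastic encoders/decoders (stochastic kernels) are realized as measurable functions of
independent i.i.d. randomization seeds, which is equivalent to the kernel formulation on
standard Borel spaces.
-/

open MeasureTheory ProbabilityTheory
open scoped ENNReal NNReal

namespace Witsenhausen

noncomputable section

/-- A path (block of length `n`) of real values. -/
abbrev Path (n : ℕ) : Type := Fin n → ℝ

/-- i.i.d. centered Gaussian vector of length `n` and variance `v`. -/
def iidGaussian (n : ℕ) (v : ℝ≥0) : Measure (Path n) :=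
  Measure.pi fun _ => gaussianReal 0 v

instance (n : ℕ) (v : ℝ≥0) : IsProbabilityMeasure (iidGaussian n v) := by
  unfold iidGaussian; infer_instance

/-- Canonical sample space: source `X₀ⁿ`, channel noise `Z₁ⁿ`, and the randomization seeds of
the (stochastic) encoder and decoder. -/
abbrev Sample (n : ℕ) : Type := Path n × Path n × Path n × Path n

/-- The base randomness: the i.i.d. `N(0,Q)` source `X₀ⁿ`, the independent i.i.d. `N(0,N)`
channel noise `Z₁ⁿ`, and independent i.i.d. randomization seeds for the stochastic encoder
and decoder. -/
def base (n : ℕ) (Q N : ℝ≥0) : Measure (Sample n) :=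
  (iidGaussian n Q).prod ((iidGaussian n N).prod
    ((iidGaussian n 1).prod (iidGaussian n 1)))

instance (n : ℕ) (Q N : ℝ≥0) : IsProbabilityMeasure (base n Q N) := by
  unfold base; infer_instance

/-- The source sequence `X₀ⁿ`. -/
def srcX0 {n : ℕ} (ω : Sample n) : Path n := ω.1
/-- The channel noise sequence `Z₁ⁿ`. -/
def noiseZ {n : ℕ} (ω : Sample n) : Path n := ω.2.1
/-- The encoder randomization seeds. -/
def seedV {n : ℕ} (ω : Sample n) : Path n := ω.2.2.1
/-- The decoder randomization seeds. -/
def seedW {n : ℕ} (ω : Sample n) : Path n := ω.2.2.2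

/-- The long-run input cost `c_P(u₁ⁿ) = (1/n) ∑_t u_{1,t}²`. -/
def costP {n : ℕ} (u : Path n) : ℝ := (1 / (n : ℝ)) * ∑ t, (u t) ^ 2

/-- The long-run estimation cost `c_S(x₁ⁿ, u₂ⁿ) = (1/n) ∑_t (x_{1,t} - u_{2,t})²`. -/
def costS {n : ℕ} (x u : Path n) : ℝ := (1 / (n : ℝ)) * ∑ t, (x t - u t) ^ 2

/-- A control design with causal encoder and causal decoder: at each time `t` the stochastic
encoder `f^t` observes `X₀^t` and the stochastic decoder `g^t` observes `Y₁^t` (stochastic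
maps are realized as measurable functions of independent randomization seeds). -/
structure Design (n : ℕ) where
  enc : Fin n → Path n → ℝ → ℝ
  dec : Fin n → Path n → ℝ → ℝ
  enc_meas : ∀ t, Measurable fun p : Path n × ℝ => enc t p.1 p.2
  dec_meas : ∀ t, Measurable fun p : Path n × ℝ => dec t p.1 p.2
  /-- causal encoding: `U_{1,t}` depends on the source only through `X₀^t`. -/
  enc_causal : ∀ (t : Fin n) (x x' : Path n) (v : ℝ),
    (∀ s, s ≤ t → x s = x' s) → enc t x v = enc t x' v
  /-- causal decoding: `U_{2,t}` depends on the channel output only through `Y₁^t`. -/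
  dec_causal : ∀ (t : Fin n) (y y' : Path n) (w : ℝ),
    (∀ s, s ≤ t → y s = y' s) → dec t y w = dec t y' w

namespace Design

variable {n : ℕ} (c : Design n)

/-- The control sequence `U₁ⁿ`. -/
def U1 (ω : Sample n) : Path n := fun t => c.enc t (srcX0 ω) (seedV ω t)
/-- The interim state `X₁ⁿ = X₀ⁿ + U₁ⁿ`. -/
def X1 (ω : Sample n) : Path n := fun t => srcX0 ω t + c.U1 ω t
/-- The channel output `Y₁ⁿ = X₁ⁿ + Z₁ⁿ`. -/
def Y1 (ω : Sample n) : Path n := fun t => c.X1 ω t + noiseZ ω t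
/-- The estimate sequence `U₂ⁿ`. -/
def U2 (ω : Sample n) : Path n := fun t => c.dec t (c.Y1 ω) (seedW ω t)

end Design

/-- `(P, S)` is an achievable pair of costs for causal encoding and causal decoding: for every
`ε > 0` there is `n₀` such that for every blocklength `n ≥ n₀` some control design makes the
expected cost deviation `E[|P - c_P(U₁ⁿ)| + |S - c_S(X₁ⁿ, U₂ⁿ)|]` at most `ε`.
This defines the region `R_ed`. -/
def achievable (Q N : ℝ≥0) (P S : ℝ) : Prop :=
  ∀ ε > (0 : ℝ), ∃ n₀ : ℕ, ∀ n ≥ n₀, ∃ c : Design n,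
    (∫⁻ ω, ENNReal.ofReal
        (|P - costP (c.U1 ω)| + |S - costS (c.X1 ω) (c.U2 ω)|) ∂(base n Q N))
      ≤ ENNReal.ofReal ε

/-- A single-letter joint distribution of `(X₀, T, U₁, X₁, Y₁, U₂)` decomposing according to
`P_{X₀} P_T P_{U₁|X₀,T} P_{X₁,Y₁|X₀,U₁} P_{U₂|T,Y₁}`: it is described by the distribution of
the time-sharing variable `T` (independent of `X₀ ~ N(0,Q)`), the conditional kernel
`P_{U₁|X₀,T}`, and the conditional kernel `P_{U₂|T,Y₁}`; the Witsenhausen channel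
`P_{X₁,Y₁|X₀,U₁}` is fixed. -/
structure SLDecomp (Q N : ℝ≥0) (T : Type) [MeasurableSpace T] where
  /-- the distribution `P_T` of the time-sharing variable -/
  μT : Measure T
  probT : IsProbabilityMeasure μT
  /-- the conditional distribution `P_{U₁|X₀,T}` -/
  κ1 : Kernel (ℝ × T) ℝ
  markov1 : IsMarkovKernel κ1
  /-- the conditional distribution `P_{U₂|T,Y₁}` -/
  κ2 : Kernel (T × ℝ) ℝ
  markov2 : IsMarkovKernel κ2

attribute [instance] SLDecomp.probT SLDecomp.markov1 SLDecomp.markov2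

namespace SLDecomp

/-- canonical coordinates `((((X₀, T), U₁), Z₁), U₂)` -/
abbrev Space (T : Type) : Type := (((ℝ × T) × ℝ) × ℝ) × ℝ

variable {Q N : ℝ≥0} {T : Type} [MeasurableSpace T]

def sX0 (q : Space T) : ℝ := q.1.1.1.1
def sT (q : Space T) : T := q.1.1.1.2
def sU1 (q : Space T) : ℝ := q.1.1.2
def sZ (q : Space T) : ℝ := q.1.2
def sU2 (q : Space T) : ℝ := q.2
def sX1 (q : Space T) : ℝ := sX0 q + sU1 q
def sY1 (q : Space T) : ℝ := sX1 q + sZ q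

/-- The joint law `P_{X₀} P_T P_{U₁|X₀,T} P_{X₁,Y₁|X₀,U₁} P_{U₂|T,Y₁}` on the canonical
space: `(X₀, T) ~ N(0,Q) ⊗ P_T`, then `U₁ ~ P_{U₁|X₀,T}`, then the memoryless Witsenhausen
channel is realized by an independent noise `Z₁ ~ N(0,N)` through `X₁ = X₀ + U₁` and
`Y₁ = X₁ + Z₁`, and finally `U₂ ~ P_{U₂|T,Y₁}`. -/
def measure (d : SLDecomp Q N T) : Measure (Space T) :=
  ((((gaussianReal 0 Q).prod d.μT) ⊗ₘ d.κ1).prod (gaussianReal 0 N)) ⊗ₘ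
    (d.κ2.comap (fun q : ((ℝ × T) × ℝ) × ℝ => (q.1.1.2, q.1.1.1 + q.1.2 + q.2))
      (by fun_prop))

instance (d : SLDecomp Q N T) : IsProbabilityMeasure d.measure := by
  unfold measure; infer_instance

/-- The induced single-letter joint law of `(X₀, T, U₁, X₁, Y₁, U₂)`. -/
def joint (d : SLDecomp Q N T) : Measure (ℝ × T × ℝ × ℝ × ℝ × ℝ) :=
  d.measure.map (fun q => (sX0 q, sT q, sU1 q, sX1 q, sY1 q, sU2 q))

/-- The pair `(P, S)` consists of the expected single-letter Witsenhausen costs of the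
decomposed distribution: `P = E[U₁²]` and `S = E[(X₁ - U₂)²]` (both finite). -/
def realizes (d : SLDecomp Q N T) (P S : ℝ) : Prop :=
  Integrable (fun q => (sU1 q) ^ 2) d.measure ∧
  Integrable (fun q => (sX1 q - sU2 q) ^ 2) d.measure ∧
  P = ∫ q, (sU1 q) ^ 2 ∂d.measure ∧
  S = ∫ q, (sX1 q - sU2 q) ^ 2 ∂d.measure

end SLDecomp

/-!
The costs reachable by memoryless policies form an upper set of the nonnegative quadrant, since
displacing the control or the estimate by a constant raises one cost at will. Points of the convex
hull of a planar upper set already lie on chords, which is why two values of `T` suffice.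

Every design costs a mixture of memoryless policies: with the randomness of the other times frozen,
time `t` is a single channel use. So achievable pairs lie in the closure of the convex hull, and the
hull is closed. Indeed, the costs of a memoryless policy with optimal decoding are the power and
the minimum mean square error of its joint law of source and control. Bounded power makes these laws
tight, and the mean square error, the integral over the output of a posterior variance that is
weakly continuous in the law, is weakly lower semicontinuous by Fatou's lemma. Conversely, points
of the hull are achieved by time sharing between two policies, by the law of large numbers.
-/

/-! ### Convex hulls of planar upper sets -/

lemma isUpperSet_convexJoin_self {E : Type*} [AddCommGroup E] [PartialOrder E]
    [IsOrderedAddMonoid E] [Module ℝ E] {A : Set E} (hA : IsUpperSet A) :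
    IsUpperSet (convexJoin ℝ A A) := by
  intro x y hxy hx
  obtain ⟨a, ha, b, hb, hx⟩ := mem_convexJoin.1 hx
  have hd : 0 ≤ y - x := sub_nonneg.2 hxy
  refine mem_convexJoin.2 ⟨y - x + a, hA (le_add_of_nonneg_left hd) ha, y - x + b,
    hA (le_add_of_nonneg_left hd) hb, ?_⟩
  simpa using (mem_segment_translate ℝ (y - x)).2 hx

lemma exists_forall_mul_fst_lt_snd {ι : Type*} [Finite ι] {y : ι → ℝ × ℝ}
    (hchord : ∀ i j, (y i).1 < 0 → 0 < (y j).1 → (y j).2 * (y i).1 < (y i).2 * (y j).1)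
    (hvert : ∀ i, (y i).1 = 0 → 0 < (y i).2) : ∃ m : ℝ, ∀ i, m * (y i).1 < (y i).2 := by
  classical
  have := Fintype.ofFinite ι
  let slopes (s : Finset ι) : Finset ℝ := s.image fun i => (y i).2 / (y i).1
  obtain ⟨m, hleft, hright⟩ := Order.exists_between_finsets
    (slopes {i | (y i).1 < 0}) (slopes {i | 0 < (y i).1}) <| by
      simp only [slopes, Finset.forall_mem_image, Finset.mem_filter_univ]
      intro i hi j hj
      rw [div_lt_iff_of_neg hi, div_mul_eq_mul_div, div_lt_iff₀ hj]
      exact hchord i j hi hj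
  simp only [slopes, Finset.forall_mem_image, Finset.mem_filter_univ] at hleft hright
  refine ⟨m, fun i => ?_⟩
  rcases lt_trichotomy (y i).1 0 with hi | hi | hi
  · exact (div_lt_iff_of_neg hi).1 (hleft hi)
  · simpa [hi] using hvert i hi
  · exact (lt_div_iff₀ hi).1 (hright hi)

lemma mem_convexJoin_self_of_smul_sub_add_smul_sub_nonpos {E : Type*} [AddCommGroup E]
    [PartialOrder E] [IsOrderedAddMonoid E] [Module ℝ E] [PosSMulMono ℝ E] {A : Set E}
    (hA : IsUpperSet A) {p q x : E} (hp : p ∈ A) (hq : q ∈ A) {a b : ℝ} (ha : 0 ≤ a) (hb : 0 ≤ b)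
    (hab : 0 < a + b) (h : a • (p - x) + b • (q - x) ≤ 0) : x ∈ convexJoin ℝ A A := by
  refine isUpperSet_convexJoin_self hA ?_ (mem_convexJoin.2 ⟨p, hp, q, hq,
    mem_segment_iff_div.2 ⟨a, b, ha, hb, hab, rfl⟩⟩)
  have hshift : (a / (a + b)) • p + (b / (a + b)) • q
      = x + (a + b)⁻¹ • (a • (p - x) + b • (q - x)) := by
    match_scalars <;> field_simp
    ring
  rw [hshift]
  exact add_le_of_nonpos_right (smul_nonpos_of_nonneg_of_nonpos (inv_nonneg.2 hab.le) h)

/-- If no chord passes weakly below `x`, then a line through `x` lies strictly below all the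
points, so `x` cannot be their barycentre. -/
lemma convexHull_eq_convexJoin_self {A : Set (ℝ × ℝ)} (hA : IsUpperSet A) :
    convexHull ℝ A = convexJoin ℝ A A := by
  refine Set.Subset.antisymm (fun x hx => ?_)
    (convexJoin_subset (subset_convexHull ℝ A) (subset_convexHull ℝ A) (convex_convexHull ℝ A))
  obtain ⟨ι, _, z, w, hz, -, hw, hw1, hx_eq⟩ := eq_pos_convex_span_of_mem_convexHull hx
  by_contra hxA
  have hbelow (i j : ι) {a b : ℝ} (ha : 0 ≤ a) (hb : 0 ≤ b) (hab : 0 < a + b) :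
      ¬ a • (z i - x) + b • (z j - x) ≤ 0 := fun h =>
    hxA (mem_convexJoin_self_of_smul_sub_add_smul_sub_nonpos hA (hz ⟨i, rfl⟩) (hz ⟨j, rfl⟩)
      ha hb hab h)
  obtain ⟨m, hm⟩ : ∃ m : ℝ, ∀ i, m * (z i - x).1 < (z i - x).2 := by
    refine exists_forall_mul_fst_lt_snd (fun i j hi hj => ?_) fun i hi => ?_
    · by_contra! hle
      refine hbelow i j hj.le (neg_nonneg.2 hi.le) (by linarith)
        (Prod.le_def.2 ⟨le_of_eq ?_, ?_⟩)
      · simp only [Prod.fst_add, Prod.smul_fst, smul_eq_mul, Prod.fst_zero]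
        ring
      · simp only [Prod.snd_add, Prod.smul_snd, smul_eq_mul, Prod.snd_zero]
        linarith
    · by_contra! hle
      have hle' : z i - x ≤ 0 := Prod.le_def.2 ⟨hi.le, hle⟩
      exact hbelow i i zero_le_one le_rfl (by norm_num) (by simpa using hle')
  have hbary : ∑ i, w i • (z i - x) = 0 := by
    simp only [smul_sub, Finset.sum_sub_distrib, ← Finset.sum_smul, hw1, one_smul, hx_eq, sub_self]
  have hbary₁ : ∑ i, w i * (z i - x).1 = 0 := by
    simpa [Prod.fst_sum] using congrArg Prod.fst hbary
  have hbary₂ : ∑ i, w i * (z i - x).2 = 0 := by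
    simpa [Prod.snd_sum] using congrArg Prod.snd hbary
  have hlt : ∑ i, w i * (m * (z i - x).1) < ∑ i, w i * (z i - x).2 :=
    Finset.sum_lt_sum_of_nonempty (Finset.nonempty_of_sum_ne_zero (hw1 ▸ one_ne_zero))
      fun i _ => mul_lt_mul_of_pos_left (hm i) (hw i)
  simp only [mul_left_comm _ m, ← Finset.mul_sum, hbary₁, hbary₂, mul_zero, lt_irrefl] at hlt

lemma exists_smul_add_smul_of_mem_convexJoin_self {E : Type*} [AddCommGroup E] [PartialOrder E]
    [IsOrderedAddMonoid E] [Module ℝ E] [IsOrderedModule ℝ E] {A : Set E}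
    (hnonneg : ∀ a ∈ A, 0 ≤ a) {x : E} (hx : x ∈ convexJoin ℝ A A) :
    ∃ a ∈ A, ∃ b ∈ A, ∃ r ∈ Set.Icc (0 : ℝ) 1, r • a + (1 - r) • b = x ∧ a ≤ (2 : ℝ) • x := by
  suffices H : ∀ a ∈ A, ∀ b ∈ A, ∀ r ∈ Set.Icc (1 / 2 : ℝ) 1, r • a + (1 - r) • b = x →
      ∃ a ∈ A, ∃ b ∈ A, ∃ r ∈ Set.Icc (0 : ℝ) 1, r • a + (1 - r) • b = x ∧ a ≤ (2 : ℝ) • x by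
    obtain ⟨a, ha, b, hb, r, s, hr, hs, hrs, rfl⟩ := mem_convexJoin.1 hx
    rcases le_total (1 / 2) r with h | h
    · exact H a ha b hb r ⟨h, by linarith⟩ (by rw [← hrs, add_sub_cancel_left])
    · exact H b hb a ha s ⟨by linarith, by linarith⟩ (by rw [← hrs, add_sub_cancel_right, add_comm])
  rintro a ha b hb r ⟨hr, hr1⟩ rfl
  refine ⟨a, ha, b, hb, r, ⟨by linarith, hr1⟩, rfl, ?_⟩
  calc a = (2 : ℝ) • (1 / 2 : ℝ) • a := by rw [smul_smul]; norm_num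
    _ ≤ (2 : ℝ) • r • a := smul_le_smul_of_nonneg_left
        (smul_le_smul_of_nonneg_right hr (hnonneg _ ha)) zero_le_two
    _ ≤ (2 : ℝ) • (r • a + (1 - r) • b) := smul_le_smul_of_nonneg_left
        (le_add_of_nonneg_right (smul_nonneg (sub_nonneg.2 hr1) (hnonneg _ hb))) zero_le_two

open Filter Topology in
/-- A chord end point may escape to infinity only with vanishing weight, and its contribution is
then absorbed because `A` is an upper set. -/
lemma isClosed_convexJoin_self {A : Set (ℝ × ℝ)} (hclosed : IsClosed A) (hupper : IsUpperSet A)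
    (hnonneg : ∀ a ∈ A, 0 ≤ a) : IsClosed (convexJoin ℝ A A) := by
  refine IsSeqClosed.isClosed fun x x₀ hx hlim => ?_
  choose a ha b hb r hr hx_eq ha_le using fun k =>
    exists_smul_add_smul_of_mem_convexJoin_self hnonneg (hx k)
  obtain ⟨M, hM⟩ := hlim.bddAbove_range
  have hc_nonneg (k : ℕ) : 0 ≤ (1 - r k) • b k :=
    smul_nonneg (sub_nonneg.2 (hr k).2) (hnonneg _ (hb k))
  have ha_mem (k : ℕ) : a k ∈ Set.Icc 0 ((2 : ℝ) • M) :=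
    ⟨hnonneg _ (ha k), (ha_le k).trans (smul_le_smul_of_nonneg_left (hM ⟨k, rfl⟩) zero_le_two)⟩
  obtain ⟨⟨r₀, a₀⟩, hr₀a₀, φ, hφ, hφ_lim⟩ :=
    (isCompact_Icc.prod isCompact_Icc).tendsto_subseq fun k => Set.mk_mem_prod (hr k) (ha_mem k)
  have hr_lim : Tendsto (r ∘ φ) atTop (𝓝 r₀) := (continuous_fst.tendsto _).comp hφ_lim
  have ha_lim : Tendsto (a ∘ φ) atTop (𝓝 a₀) := (continuous_snd.tendsto _).comp hφ_lim
  have ha₀ : a₀ ∈ A := hclosed.mem_of_tendsto ha_lim (.of_forall fun k => ha _)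
  have hc_lim : Tendsto (fun k => (1 - r (φ k)) • b (φ k)) atTop (𝓝 (x₀ - r₀ • a₀)) :=
    ((hlim.comp hφ.tendsto_atTop).sub (hr_lim.smul ha_lim)).congr fun k => by
      simp only [Function.comp_apply, ← hx_eq (φ k), add_sub_cancel_left]
  have hc₀ : 0 ≤ x₀ - r₀ • a₀ := ge_of_tendsto' hc_lim fun k => hc_nonneg _
  rcases eq_or_lt_of_le hr₀a₀.1.2 with rfl | hr₀
  · rw [one_smul, sub_nonneg] at hc₀
    exact mem_convexJoin.2 ⟨x₀, hupper hc₀ ha₀, x₀, hupper hc₀ ha₀, left_mem_segment ℝ _ _⟩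
  · have hr₀' : 1 - r₀ ≠ 0 := (sub_pos.2 hr₀).ne'
    have hb_lim : Tendsto (b ∘ φ) atTop (𝓝 ((1 - r₀)⁻¹ • (x₀ - r₀ • a₀))) := by
      refine (((tendsto_const_nhds.sub hr_lim).inv₀ hr₀').smul hc_lim).congr' ?_
      filter_upwards [hr_lim.eventually_lt_const hr₀] with k hk
      exact inv_smul_smul₀ (sub_pos.2 hk).ne' _
    refine mem_convexJoin.2 ⟨a₀, ha₀, _, hclosed.mem_of_tendsto hb_lim (.of_forall fun k => hb _),
      r₀, 1 - r₀, hr₀a₀.1.1, (sub_pos.2 hr₀).le, by ring, ?_⟩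
    rw [smul_inv_smul₀ hr₀', add_sub_cancel]

/-! ### Simulation of kernels by Gaussian seeds -/

lemma continuous_cdf (μ : Measure ℝ) [IsProbabilityMeasure μ] [NullSingletonClass μ] :
    Continuous (cdf μ) := by
  refine continuous_iff_continuousAt.2 fun a => ?_
  refine continuousAt_iff_continuous_left'_right'.2
    ⟨?_, ((cdf μ).right_continuous a).mono Set.Ioi_subset_Ici_self⟩
  have hjump := (cdf μ).measure_singleton a
  rw [measure_cdf, measure_singleton, eq_comm, ENNReal.ofReal_eq_zero, sub_nonpos] at hjump
  exact (monotone_cdf μ).continuousWithinAt_Iio_iff_leftLim_eq.2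
    (((monotone_cdf μ).leftLim_le le_rfl).antisymm hjump)

lemma measure_cdf_le (μ : Measure ℝ) [IsProbabilityMeasure μ] [NullSingletonClass μ] {c : ℝ}
    (hc0 : 0 ≤ c) (hc1 : c < 1) : μ {x | cdf μ x ≤ c} = ENNReal.ofReal c := by
  set s := {x | cdf μ x ≤ c}
  obtain ⟨b, hb⟩ := ((tendsto_cdf_atTop μ).eventually_const_lt hc1).exists
  have hbdd : BddAbove s := ⟨b, fun x hx => ((monotone_cdf μ).reflect_lt (hx.trans_lt hb)).le⟩
  have hrange (h : 0 < c) : ∃ x ∈ s, cdf μ x = c := by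
    obtain ⟨a, ha⟩ := ((tendsto_cdf_atBot μ).eventually_lt_const h).exists
    obtain ⟨x, hx⟩ := mem_range_of_exists_le_of_exists_ge (continuous_cdf μ) ⟨a, ha.le⟩ ⟨b, hb.le⟩
    exact ⟨x, hx.le, hx⟩
  rcases s.eq_empty_or_nonempty with hs | hs
  · rw [hs, measure_empty, eq_comm, ENNReal.ofReal_eq_zero]
    by_contra! h
    obtain ⟨x, hx, -⟩ := hrange h
    exact (hs ▸ hx : x ∈ (∅ : Set ℝ))
  · have hmem : sSup s ∈ s := (isClosed_le (continuous_cdf μ) continuous_const).csSup_mem hs hbdd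
    have hs_eq : s = Set.Iic (sSup s) := Set.Subset.antisymm (fun x hx => le_csSup hbdd hx)
      fun x hx => (monotone_cdf μ hx).trans hmem
    have hcdf : cdf μ (sSup s) = c := by
      refine le_antisymm hmem ?_
      rcases hc0.eq_or_lt with rfl | h
      · exact cdf_nonneg μ _
      · obtain ⟨x, hx, hxc⟩ := hrange h
        exact hxc.ge.trans (monotone_cdf μ (le_csSup hbdd hx))
    rw [hs_eq, ← hcdf, ofReal_cdf]

lemma exists_measurable_map_eq_volume_unitInterval (μ : Measure ℝ) [IsProbabilityMeasure μ]
    [NullSingletonClass μ] : ∃ h : ℝ → unitInterval, Measurable h ∧ μ.map h = volume := by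
  have hmeas : Measurable fun x => (⟨cdf μ x, cdf_nonneg μ x, cdf_le_one μ x⟩ : unitInterval) :=
    (continuous_cdf μ).measurable.subtype_mk
  refine ⟨_, hmeas, ?_⟩
  have := Measure.isProbabilityMeasure_map (μ := μ) hmeas.aemeasurable
  refine Measure.ext_of_Iic _ _ fun c => ?_
  rw [Measure.map_apply hmeas measurableSet_Iic, unitInterval.volume_Iic]
  change μ {x | cdf μ x ≤ c} = _
  rcases c.2.2.eq_or_lt with h | h
  · simp only [h, cdf_le_one, Set.ofPred_true, measure_univ, ENNReal.ofReal_one]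
  · exact measure_cdf_le μ c.2.1 h

lemma exists_gaussianReal_map_eq_kernel {α β : Type*} [MeasurableSpace α] [MeasurableSpace β]
    [StandardBorelSpace β] [Nonempty β] (κ : Kernel α β) [IsMarkovKernel κ] :
    ∃ f : α → ℝ → β, Measurable (Function.uncurry f) ∧
      ∀ a, (gaussianReal 0 1).map (f a) = κ a := by
  have : NullSingletonClass (gaussianReal 0 1) := nullSingletonClass_gaussianReal one_ne_zero
  obtain ⟨h, hh, hmap⟩ := exists_measurable_map_eq_volume_unitInterval (gaussianReal 0 1)
  obtain ⟨f, hf, hfmap⟩ := Kernel.exists_measurable_map_eq_unitInterval κ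
  refine ⟨fun a => f a ∘ h, hf.comp (measurable_fst.prodMk (hh.comp measurable_snd)), fun a => ?_⟩
  rw [← Measure.map_map hf.of_uncurry_left hh, hmap, hfmap]

/-! ### Minimum mean square error in Gaussian noise -/

/-- The unnormalised `j`-th posterior moment, given the output `y`, of a state with law `ν`
observed in Gaussian noise of variance `N`. The zeroth moment is the density of the output. -/
def posteriorMoment (N : ℝ≥0) (ν : Measure ℝ) (j : ℕ) (y : ℝ) : ℝ :=
  ∫ x, x ^ j * gaussianPDFReal x N y ∂ν

/-- The conditional mean of a state with law `ν` given that its observation in Gaussian noise of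
variance `N` equals `y`. -/
def posteriorMean (N : ℝ≥0) (ν : Measure ℝ) (y : ℝ) : ℝ :=
  posteriorMoment N ν 1 y / posteriorMoment N ν 0 y

/-- The conditional variance of a state with law `ν` given that its observation in Gaussian noise
of variance `N` equals `y`, multiplied by the density of the observation at `y`. -/
def posteriorVarMass (N : ℝ≥0) (ν : Measure ℝ) (y : ℝ) : ℝ :=
  posteriorMoment N ν 2 y - posteriorMoment N ν 1 y ^ 2 / posteriorMoment N ν 0 y

/-- The minimum mean square error for estimating a state with law `ν` from its observation in
Gaussian noise of variance `N`, that is, the error of the conditional mean. -/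
def mmse (N : ℝ≥0) (ν : Measure ℝ) : ℝ≥0∞ :=
  ∫⁻ x, ∫⁻ z, ENNReal.ofReal ((x - posteriorMean N ν (x + z)) ^ 2) ∂gaussianReal 0 N ∂ν

section MMSE

variable {N : ℝ≥0}

@[fun_prop]
lemma continuous_gaussianPDFReal_mean (N : ℝ≥0) (y : ℝ) :
    Continuous fun x => gaussianPDFReal x N y := by
  unfold gaussianPDFReal; fun_prop

lemma exists_bound_pow_mul_gaussianPDFReal (hN : N ≠ 0) (j : ℕ) (y : ℝ) :
    ∃ C, ∀ x, ‖x ^ j * gaussianPDFReal x N y‖ ≤ C := by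
  have : (0 : ℝ) < N := by positivity
  refine ⟨(√(2 * Real.pi * N))⁻¹ * (j.factorial * Real.exp (|y| + N / 2)), fun x => ?_⟩
  have hpow : |x| ^ j ≤ j.factorial * Real.exp |x| := by
    rw [← div_le_iff₀' (by positivity)]
    exact Real.pow_div_factorial_le_exp _ (abs_nonneg x) j
  have hexponent : |x| + -(y - x) ^ 2 / (2 * N) ≤ |y| + N / 2 := by
    have hyoung : |x - y| - (y - x) ^ 2 / (2 * N) ≤ N / 2 := by
      rw [sub_le_iff_le_add, ← sub_le_iff_le_add', le_div_iff₀ (by positivity), ← sq_abs (y - x),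
        abs_sub_comm y x]
      nlinarith [sq_nonneg (|x - y| - N)]
    rw [neg_div]
    linarith [abs_sub_abs_le_abs_sub x y]
  rw [norm_mul, norm_pow, Real.norm_eq_abs, Real.norm_of_nonneg (gaussianPDFReal_nonneg _ _ _),
    gaussianPDFReal, mul_left_comm]
  refine mul_le_mul_of_nonneg_left ?_ (by positivity)
  calc |x| ^ j * Real.exp (-(y - x) ^ 2 / (2 * N))
      ≤ j.factorial * Real.exp |x| * Real.exp (-(y - x) ^ 2 / (2 * N)) := by gcongr
    _ = j.factorial * Real.exp (|x| + -(y - x) ^ 2 / (2 * N)) := by rw [Real.exp_add, mul_assoc]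
    _ ≤ j.factorial * Real.exp (|y| + N / 2) := by gcongr

lemma integrable_pow_mul_gaussianPDFReal (hN : N ≠ 0) (ν : Measure ℝ) [IsFiniteMeasure ν]
    (j : ℕ) (y : ℝ) : Integrable (fun x => x ^ j * gaussianPDFReal x N y) ν := by
  obtain ⟨C, hC⟩ := exists_bound_pow_mul_gaussianPDFReal hN j y
  exact .of_bound (by fun_prop) C (.of_forall hC)

@[fun_prop]
lemma measurable_posteriorMoment (N : ℝ≥0) (ν : Measure ℝ) [SFinite ν] (j : ℕ) :
    Measurable (posteriorMoment N ν j) := by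
  have h : Measurable fun p : ℝ × ℝ => p.2 ^ j * gaussianPDFReal p.2 N p.1 := by fun_prop
  exact (h.stronglyMeasurable.integral_prod_right' (ν := ν)).measurable

@[fun_prop]
lemma measurable_posteriorMean (N : ℝ≥0) (ν : Measure ℝ) [SFinite ν] :
    Measurable (posteriorMean N ν) := by
  unfold posteriorMean; fun_prop

lemma measurable_posteriorVarMass (N : ℝ≥0) (ν : Measure ℝ) [SFinite ν] :
    Measurable (posteriorVarMass N ν) := by
  unfold posteriorVarMass; fun_prop

lemma posteriorMoment_zero_pos (hN : N ≠ 0) (ν : Measure ℝ) [IsFiniteMeasure ν] [NeZero ν]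
    (y : ℝ) : 0 < posteriorMoment N ν 0 y := by
  have hpos (x : ℝ) : 0 < x ^ 0 * gaussianPDFReal x N y := by
    rw [pow_zero, one_mul]; exact gaussianPDFReal_pos _ _ _ hN
  refine (integral_pos_iff_support_of_nonneg (fun x => (hpos x).le)
    (integrable_pow_mul_gaussianPDFReal hN ν 0 y)).2 ?_
  rw [Set.eq_univ_of_forall fun x => Function.mem_support.2 (hpos x).ne']
  exact NeZero.pos _

/-- The cross term vanishes since the estimation error of the conditional mean is orthogonal to the
output. -/
lemma integral_gaussianPDFReal_mul_sub_sq (hN : N ≠ 0) (ν : Measure ℝ) [IsFiniteMeasure ν]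
    [NeZero ν] (u y : ℝ) :
    ∫ x, gaussianPDFReal x N y * (x - u) ^ 2 ∂ν =
      posteriorVarMass N ν y + (u - posteriorMean N ν y) ^ 2 * posteriorMoment N ν 0 y := by
  have hint (j : ℕ) (c : ℝ) := (integrable_pow_mul_gaussianPDFReal hN ν j y).const_mul c
  have hM₀ := (posteriorMoment_zero_pos hN ν y).ne'
  calc ∫ x, gaussianPDFReal x N y * (x - u) ^ 2 ∂ν
      = ∫ x, 1 * (x ^ 2 * gaussianPDFReal x N y) + -2 * u * (x ^ 1 * gaussianPDFReal x N y)
          + u ^ 2 * (x ^ 0 * gaussianPDFReal x N y) ∂ν := by congr with x; ring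
    _ = 1 * posteriorMoment N ν 2 y + -2 * u * posteriorMoment N ν 1 y
          + u ^ 2 * posteriorMoment N ν 0 y := by
      rw [integral_add (by exact (hint 2 _).add (hint 1 _)) (hint 0 _),
        integral_add (hint 2 _) (hint 1 _), integral_const_mul, integral_const_mul,
        integral_const_mul]
      rfl
    _ = _ := by unfold posteriorVarMass posteriorMean; field_simp; ring

lemma posteriorVarMass_nonneg (hN : N ≠ 0) (ν : Measure ℝ) [IsFiniteMeasure ν] [NeZero ν]
    (y : ℝ) : 0 ≤ posteriorVarMass N ν y := by
  have h := integral_gaussianPDFReal_mul_sub_sq hN ν (posteriorMean N ν y) y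
  rw [sub_self, zero_pow two_ne_zero, zero_mul, add_zero] at h
  exact h ▸ integral_nonneg fun x => mul_nonneg (gaussianPDFReal_nonneg _ _ _) (sq_nonneg _)

lemma lintegral_gaussianPDF_mul_sub_sq (hN : N ≠ 0) (ν : Measure ℝ) [IsFiniteMeasure ν]
    [NeZero ν] (u y : ℝ) :
    ∫⁻ x, gaussianPDF x N y * ENNReal.ofReal ((x - u) ^ 2) ∂ν =
      ENNReal.ofReal (posteriorVarMass N ν y) +
        ENNReal.ofReal ((u - posteriorMean N ν y) ^ 2 * posteriorMoment N ν 0 y) := by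
  have hint : Integrable (fun x => gaussianPDFReal x N y * (x - u) ^ 2) ν := by
    have h (j : ℕ) (c : ℝ) := (integrable_pow_mul_gaussianPDFReal hN ν j y).const_mul c
    refine ((h 2 1).add ((h 1 (-2 * u)).add (h 0 (u ^ 2)))).congr (.of_forall fun x => ?_)
    simp only [Pi.add_apply]
    ring
  rw [← ENNReal.ofReal_add (posteriorVarMass_nonneg hN ν y)
      (mul_nonneg (sq_nonneg _) (posteriorMoment_zero_pos hN ν y).le),
    ← integral_gaussianPDFReal_mul_sub_sq hN, ofReal_integral_eq_lintegral_ofReal hint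
      (.of_forall fun x => mul_nonneg (gaussianPDFReal_nonneg _ _ _) (sq_nonneg _))]
  exact lintegral_congr fun x => by
    rw [ENNReal.ofReal_mul (gaussianPDFReal_nonneg _ _ _), gaussianPDF]

lemma lintegral_gaussianReal_add (hN : N ≠ 0) (ν : Measure ℝ) [SFinite ν]
    {F : ℝ → ℝ → ℝ≥0∞} (hF : Measurable (Function.uncurry F)) :
    ∫⁻ x, ∫⁻ z, F x (x + z) ∂gaussianReal 0 N ∂ν =
      ∫⁻ y, ∫⁻ x, gaussianPDF x N y * F x y ∂ν := by
  have hmeas : Measurable (Function.uncurry fun y x => gaussianPDF x N y * F x y) := by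
    unfold gaussianPDF Function.uncurry at *; fun_prop
  rw [lintegral_lintegral_swap (f := fun y x => gaussianPDF x N y * F x y) hmeas.aemeasurable]
  refine lintegral_congr fun x => ?_
  have hFx : Measurable (F x) := hF.of_uncurry_left
  rw [← lintegral_map (g := fun z => x + z) hFx (by fun_prop), gaussianReal_map_const_add, zero_add,
    gaussianReal_of_var_ne_zero x hN,
    lintegral_withDensity_eq_lintegral_mul _ (measurable_gaussianPDF x N) hFx]
  rfl

lemma lintegral_sub_sq_eq_add (hN : N ≠ 0) (ν : Measure ℝ) [IsFiniteMeasure ν] [NeZero ν]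
    {g : ℝ → ℝ} (hg : Measurable g) :
    ∫⁻ x, ∫⁻ z, ENNReal.ofReal ((x - g (x + z)) ^ 2) ∂gaussianReal 0 N ∂ν =
      (∫⁻ y, ENNReal.ofReal (posteriorVarMass N ν y)) +
        ∫⁻ y, ENNReal.ofReal ((g y - posteriorMean N ν y) ^ 2 * posteriorMoment N ν 0 y) := by
  rw [lintegral_gaussianReal_add hN ν (F := fun x y => ENNReal.ofReal ((x - g y) ^ 2))
    (by unfold Function.uncurry; fun_prop)]
  simp only [lintegral_gaussianPDF_mul_sub_sq hN]
  exact lintegral_add_left (measurable_posteriorVarMass N ν).ennreal_ofReal _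

lemma mmse_eq_lintegral_posteriorVarMass (hN : N ≠ 0) (ν : Measure ℝ) [IsFiniteMeasure ν]
    [NeZero ν] : mmse N ν = ∫⁻ y, ENNReal.ofReal (posteriorVarMass N ν y) := by
  rw [mmse, lintegral_sub_sq_eq_add hN ν (measurable_posteriorMean N ν)]
  simp

lemma mmse_le_lintegral_sub_sq (hN : N ≠ 0) (ν : Measure ℝ) [IsFiniteMeasure ν] [NeZero ν]
    {g : ℝ → ℝ} (hg : Measurable g) :
    mmse N ν ≤ ∫⁻ x, ∫⁻ z, ENNReal.ofReal ((x - g (x + z)) ^ 2) ∂gaussianReal 0 N ∂ν := by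
  rw [mmse_eq_lintegral_posteriorVarMass hN, lintegral_sub_sq_eq_add hN ν hg]
  exact le_self_add

open Filter Topology in
lemma tendsto_posteriorMoment (hN : N ≠ 0) {ι : Type*} {l : Filter ι} (j : ℕ) (y : ℝ)
    {ν : ι → ProbabilityMeasure ℝ} {ν₀ : ProbabilityMeasure ℝ} (h : Tendsto ν l (𝓝 ν₀)) :
    Tendsto (fun k => posteriorMoment N (ν k) j y) l (𝓝 (posteriorMoment N ν₀ j y)) := by
  obtain ⟨C, hC⟩ := exists_bound_pow_mul_gaussianPDFReal hN j y
  exact ProbabilityMeasure.tendsto_iff_forall_integral_tendsto.1 h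
    (BoundedContinuousFunction.ofNormedAddCommGroup (fun x => x ^ j * gaussianPDFReal x N y)
      (by fun_prop) C hC)

open Filter Topology in
lemma mmse_le_liminf (hN : N ≠ 0) {ν : ℕ → ProbabilityMeasure ℝ} {ν₀ : ProbabilityMeasure ℝ}
    (h : Tendsto ν atTop (𝓝 ν₀)) : mmse N ν₀ ≤ liminf (fun k => mmse N (ν k)) atTop := by
  have hpointwise (y : ℝ) : Tendsto (fun k => ENNReal.ofReal (posteriorVarMass N (ν k) y)) atTop
      (𝓝 (ENNReal.ofReal (posteriorVarMass N ν₀ y))) :=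
    (ENNReal.continuous_ofReal.tendsto _).comp
      ((tendsto_posteriorMoment hN 2 y h).sub
        (((tendsto_posteriorMoment hN 1 y h).pow 2).div (tendsto_posteriorMoment hN 0 y h)
          (posteriorMoment_zero_pos hN _ y).ne'))
  simp only [mmse_eq_lintegral_posteriorVarMass hN]
  calc ∫⁻ y, ENNReal.ofReal (posteriorVarMass N ν₀ y)
      = ∫⁻ y, liminf (fun k => ENNReal.ofReal (posteriorVarMass N (ν k) y)) atTop :=
        lintegral_congr fun y => (hpointwise y).liminf_eq.symm
    _ ≤ _ := lintegral_liminf_le fun k => (measurable_posteriorVarMass N (ν k)).ennreal_ofReal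

end MMSE

/-! ### Memoryless policies -/

/-- A memoryless control policy: a randomised encoder acting on one source letter and a
randomised decoder acting on one channel output, the last argument of each being its seed. -/
structure Policy where
  enc : ℝ → ℝ → ℝ
  dec : ℝ → ℝ → ℝ
  measurable_enc : Measurable (Function.uncurry enc)
  measurable_dec : Measurable (Function.uncurry dec)

/-- The randomness `(X₀, Z₁, V, W)` behind one channel use: source letter, channel noise, encoder
seed and decoder seed. -/
abbrev Letter : Type := ℝ × ℝ × ℝ × ℝ

/-- The law of the randomness behind one channel use. -/
def letterLaw (Q N : ℝ≥0) : Measure Letter :=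
  (gaussianReal 0 Q).prod ((gaussianReal 0 N).prod ((gaussianReal 0 1).prod (gaussianReal 0 1)))

instance (Q N : ℝ≥0) : IsProbabilityMeasure (letterLaw Q N) := by
  unfold letterLaw; infer_instance

lemma measurePreserving_prodProdProdComm {α β γ δ : Type*} [MeasurableSpace α]
    [MeasurableSpace β] [MeasurableSpace γ] [MeasurableSpace δ] (μa : Measure α) (μb : Measure β)
    (μc : Measure γ) (μd : Measure δ) [SFinite μa] [SFinite μb] [SFinite μc] [SFinite μd] :
    MeasurePreserving (fun p : (α × β) × γ × δ => (p.1.1, p.2.1, p.1.2, p.2.2))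
      ((μa.prod μb).prod (μc.prod μd)) (μa.prod (μc.prod (μb.prod μd))) :=
  ((MeasurePreserving.id μa).prod ((measurePreserving_prodAssoc μc μb μd).comp
    ((Measure.measurePreserving_swap.prod (MeasurePreserving.id μd)).comp
      (measurePreserving_prodAssoc μb μc μd).symm))).comp
    (measurePreserving_prodAssoc μa μb (μc.prod μd))

lemma lintegral_letterLaw {Q N : ℝ≥0} {F : Letter → ℝ≥0∞} (hF : Measurable F) :
    ∫⁻ q, F q ∂letterLaw Q N = ∫⁻ w, ∫⁻ p, ∫⁻ z, F (p.1, z, p.2, w) ∂gaussianReal 0 N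
      ∂((gaussianReal 0 Q).prod (gaussianReal 0 1)) ∂gaussianReal 0 1 := by
  rw [letterLaw, ← (measurePreserving_prodProdProdComm _ _ _ _).lintegral_comp hF,
    lintegral_prod_symm' _ (by fun_prop)]
  refine (lintegral_prod_symm' _ (Measurable.lintegral_prod_left'
    (f := fun p : (ℝ × ℝ) × ℝ × ℝ => F (p.1.1, p.2.1, p.1.2, p.2.2)) (by fun_prop))).trans ?_
  exact lintegral_congr fun w => lintegral_lintegral_swap (by fun_prop)

namespace Policy

variable (ρ : Policy)

/-- The control `U₁`. -/
def control (q : Letter) : ℝ := ρ.enc q.1 q.2.2.1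

/-- The interim state `X₁`. -/
def state (q : Letter) : ℝ := q.1 + ρ.control q

/-- The estimate `U₂` of the interim state. -/
def estimate (q : Letter) : ℝ := ρ.dec (ρ.state q + q.2.1) q.2.2.2

/-- The pair of costs incurred in one channel use. -/
def cost (q : Letter) : ℝ × ℝ := (ρ.control q ^ 2, (ρ.state q - ρ.estimate q) ^ 2)

@[fun_prop]
lemma measurable_control : Measurable ρ.control :=
  ρ.measurable_enc.comp (by fun_prop : Measurable fun q : Letter => (q.1, q.2.2.1))

@[fun_prop]
lemma measurable_state : Measurable ρ.state := by
  unfold state; fun_prop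

@[fun_prop]
lemma measurable_estimate : Measurable ρ.estimate :=
  ρ.measurable_dec.comp
    (by fun_prop : Measurable fun q : Letter => (ρ.state q + q.2.1, q.2.2.2))

@[fun_prop]
lemma measurable_cost : Measurable ρ.cost := by
  unfold cost; fun_prop

lemma cost_nonneg (q : Letter) : 0 ≤ ρ.cost q := ⟨sq_nonneg _, sq_nonneg _⟩

/-- The joint law of the source letter and the control. -/
def encLaw (Q : ℝ≥0) : Measure (ℝ × ℝ) :=
  ((gaussianReal 0 Q).prod (gaussianReal 0 1)).map fun p => (p.1, ρ.enc p.1 p.2)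

lemma measurable_prodMk_enc : Measurable fun p : ℝ × ℝ => (p.1, ρ.enc p.1 p.2) :=
  measurable_fst.prodMk ρ.measurable_enc

instance (Q : ℝ≥0) : IsProbabilityMeasure (ρ.encLaw Q) :=
  Measure.isProbabilityMeasure_map ρ.measurable_prodMk_enc.aemeasurable

lemma fst_encLaw (Q : ℝ≥0) : (ρ.encLaw Q).fst = gaussianReal 0 Q := by
  exact (Measure.fst_map_prodMk ρ.measurable_enc).trans Measure.fst_prod

lemma lintegral_cost_fst (Q N : ℝ≥0) :
    ∫⁻ q, ENNReal.ofReal (ρ.cost q).1 ∂letterLaw Q N =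
      ∫⁻ q, ENNReal.ofReal (q.2 ^ 2) ∂ρ.encLaw Q := by
  rw [lintegral_letterLaw (by fun_prop), encLaw,
    lintegral_map (by fun_prop) ρ.measurable_prodMk_enc]
  simp [cost, control]

lemma lintegral_cost_snd (Q N : ℝ≥0) :
    ∫⁻ q, ENNReal.ofReal (ρ.cost q).2 ∂letterLaw Q N =
      ∫⁻ w, ∫⁻ x, ∫⁻ z, ENNReal.ofReal ((x - ρ.dec (x + z) w) ^ 2) ∂gaussianReal 0 N
        ∂(ρ.encLaw Q).map (fun q => q.1 + q.2) ∂gaussianReal 0 1 := by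
  rw [lintegral_letterLaw (by fun_prop)]
  refine lintegral_congr fun w => ?_
  have hdec : Measurable fun y => ρ.dec y w := ρ.measurable_dec.of_uncurry_right
  have hsq : Measurable fun x => ∫⁻ z, ENNReal.ofReal ((x - ρ.dec (x + z) w) ^ 2)
      ∂gaussianReal 0 N :=
    Measurable.lintegral_prod_right' (f := fun p : ℝ × ℝ =>
      ENNReal.ofReal ((p.1 - ρ.dec (p.1 + p.2) w) ^ 2)) (by fun_prop)
  rw [lintegral_map hsq (by fun_prop), encLaw, lintegral_map (by fun_prop) ρ.measurable_prodMk_enc]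
  rfl

/-- The policy whose control is displaced by `c` and whose estimation error is displaced
by `-d`. -/
def shift (c d : ℝ) : Policy where
  enc x v := ρ.enc x v + c
  dec y w := ρ.dec (y - c) w + c + d
  measurable_enc := ρ.measurable_enc.add_const c
  measurable_dec := ((ρ.measurable_dec.comp
    (by fun_prop : Measurable fun p : ℝ × ℝ => (p.1 - c, p.2))).add_const c).add_const d

lemma cost_shift (c d : ℝ) (q : Letter) :
    (ρ.shift c d).cost q = ((ρ.control q + c) ^ 2, (ρ.state q - ρ.estimate q - d) ^ 2) := by
  have hy : q.1 + (ρ.enc q.1 q.2.2.1 + c) + q.2.1 - c = q.1 + ρ.enc q.1 q.2.2.1 + q.2.1 := by ring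
  simp only [cost, control, state, estimate, shift, hy]
  congr 2
  ring

end Policy

lemma exists_integral_add_const_sq_eq {Ω : Type*} [MeasurableSpace Ω] {μ : Measure Ω}
    [IsProbabilityMeasure μ] {X : Ω → ℝ} (hX : MemLp X 2 μ) {s : ℝ} (hs : ∫ ω, X ω ^ 2 ∂μ ≤ s) :
    ∃ c, ∫ ω, (X ω + c) ^ 2 ∂μ = s := by
  set m := ∫ ω, X ω ∂μ
  refine ⟨-m + √(m ^ 2 + (s - ∫ ω, X ω ^ 2 ∂μ)), ?_⟩
  have hsqrt := Real.sq_sqrt (add_nonneg (sq_nonneg m) (sub_nonneg.2 hs))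
  set r := √(m ^ 2 + (s - ∫ ω, X ω ^ 2 ∂μ))
  have hint : Integrable X μ := hX.integrable one_le_two
  calc ∫ ω, (X ω + (-m + r)) ^ 2 ∂μ
      = ∫ ω, X ω ^ 2 + X ω * (2 * (-m + r)) + (-m + r) ^ 2 ∂μ := by congr with ω; ring
    _ = ∫ ω, X ω ^ 2 ∂μ + m * (2 * (-m + r)) + (-m + r) ^ 2 := by
      rw [integral_add (by exact hX.integrable_sq.add (hint.mul_const _)) (integrable_const _),
        integral_add hX.integrable_sq (hint.mul_const _), integral_mul_const, integral_const,
        probReal_univ, one_smul]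
    _ = s := by linear_combination hsqrt

/-- The finite expected costs attained exactly by memoryless policies. -/
def memorylessRegion (Q N : ℝ≥0) : Set (ℝ × ℝ) :=
  {a | ∃ ρ : Policy, Integrable ρ.cost (letterLaw Q N) ∧ ∫ q, ρ.cost q ∂letterLaw Q N = a}

lemma nonneg_of_mem_memorylessRegion {Q N : ℝ≥0} : ∀ a ∈ memorylessRegion Q N, 0 ≤ a := by
  rintro _ ⟨ρ, -, rfl⟩
  exact integral_nonneg ρ.cost_nonneg

lemma isUpperSet_memorylessRegion (Q N : ℝ≥0) : IsUpperSet (memorylessRegion Q N) := by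
  rintro _ b hab ⟨ρ, hρ, rfl⟩
  have hcontrol : MemLp ρ.control 2 (letterLaw Q N) :=
    (memLp_two_iff_integrable_sq ρ.measurable_control.aestronglyMeasurable).2 hρ.fst
  have herror : MemLp (fun q => ρ.state q - ρ.estimate q) 2 (letterLaw Q N) :=
    (memLp_two_iff_integrable_sq (by fun_prop)).2 hρ.snd
  obtain ⟨c, hc⟩ := exists_integral_add_const_sq_eq hcontrol ((fst_integral hρ).ge.trans hab.1)
  obtain ⟨d, hd⟩ := exists_integral_add_const_sq_eq herror ((snd_integral hρ).ge.trans hab.2)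
  have hcontrol' : Integrable (fun q => (ρ.control q + c) ^ 2) (letterLaw Q N) :=
    (hcontrol.add (memLp_const c)).integrable_sq
  have herror' : Integrable (fun q => (ρ.state q - ρ.estimate q + d) ^ 2) (letterLaw Q N) :=
    (herror.add (memLp_const d)).integrable_sq
  have hcost : (ρ.shift c (-d)).cost =
      fun q => ((ρ.control q + c) ^ 2, (ρ.state q - ρ.estimate q + d) ^ 2) :=
    funext fun q => by rw [ρ.cost_shift, sub_neg_eq_add]
  refine ⟨ρ.shift c (-d), hcost ▸ hcontrol'.prodMk herror', ?_⟩
  rw [hcost, integral_pair hcontrol' herror']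
  exact Prod.ext hc hd

lemma mem_memorylessRegion_of_lintegral_le {Q N : ℝ≥0} (ρ : Policy) {a : ℝ × ℝ} (ha : 0 ≤ a)
    (hfst : ∫⁻ q, ENNReal.ofReal (ρ.cost q).1 ∂letterLaw Q N ≤ ENNReal.ofReal a.1)
    (hsnd : ∫⁻ q, ENNReal.ofReal (ρ.cost q).2 ∂letterLaw Q N ≤ ENNReal.ofReal a.2) :
    a ∈ memorylessRegion Q N := by
  have key {f : Letter → ℝ} {b : ℝ} (hf : Measurable f) (hf0 : ∀ q, 0 ≤ f q) (hb : 0 ≤ b)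
      (h : ∫⁻ q, ENNReal.ofReal (f q) ∂letterLaw Q N ≤ ENNReal.ofReal b) :
      Integrable f (letterLaw Q N) ∧ ∫ q, f q ∂letterLaw Q N ≤ b := by
    refine ⟨(lintegral_ofReal_ne_top_iff_integrable hf.aestronglyMeasurable (.of_forall hf0)).1
      (h.trans_lt ENNReal.ofReal_lt_top).ne, ?_⟩
    rw [integral_eq_lintegral_of_nonneg_ae (.of_forall hf0) hf.aestronglyMeasurable]
    exact ENNReal.toReal_le_of_le_ofReal hb h
  obtain ⟨hint₁, hle₁⟩ := key (by fun_prop) (fun q => (ρ.cost_nonneg q).1) ha.1 hfst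
  obtain ⟨hint₂, hle₂⟩ := key (by fun_prop) (fun q => (ρ.cost_nonneg q).2) ha.2 hsnd
  have hint := hint₁.prodMk hint₂
  refine isUpperSet_memorylessRegion Q N ⟨?_, ?_⟩ ⟨ρ, hint, rfl⟩
  · exact (fst_integral hint).trans_le hle₁
  · exact (snd_integral hint).trans_le hle₂

lemma map_prodMk_eq_compProd {α β γ : Type*} [MeasurableSpace α] [MeasurableSpace β]
    [MeasurableSpace γ] {μ : Measure α} {ν : Measure γ} [SFinite μ] [SFinite ν]
    {κ : Kernel α β} [IsSFiniteKernel κ] {f : α → γ → β} (hf : Measurable (Function.uncurry f))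
    (hfκ : ∀ a, ν.map (f a) = κ a) :
    (μ.prod ν).map (fun p => (p.1, f p.1 p.2)) = μ ⊗ₘ κ := by
  refine Measure.ext_of_lintegral _ fun F hF => ?_
  have hmeas : Measurable fun p : α × γ => (p.1, f p.1 p.2) := measurable_fst.prodMk hf
  rw [lintegral_map hF hmeas, lintegral_prod _ (by exact (hF.comp hmeas).aemeasurable),
    Measure.lintegral_compProd hF]
  refine lintegral_congr fun a => ?_
  rw [← hfκ, lintegral_map (by fun_prop) hf.of_uncurry_left]

lemma exists_policy_encLaw_eq {Q : ℝ≥0} {π : Measure (ℝ × ℝ)} [IsProbabilityMeasure π]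
    (hπ : π.fst = gaussianReal 0 Q) {g : ℝ → ℝ} (hg : Measurable g) :
    ∃ ρ : Policy, ρ.encLaw Q = π ∧ ρ.dec = fun y _ => g y := by
  obtain ⟨f, hf, hfκ⟩ := exists_gaussianReal_map_eq_kernel π.condKernel
  refine ⟨⟨f, fun y _ => g y, hf, hg.comp measurable_fst⟩, ?_, rfl⟩
  rw [Policy.encLaw, ← hπ, map_prodMk_eq_compProd hf hfκ, π.disintegrate]

/-- A memoryless policy matters only through the joint law of source letter and control,
optimal decoding being conditional expectation. -/
lemma mem_memorylessRegion_iff {Q N : ℝ≥0} (hN : N ≠ 0) {a : ℝ × ℝ} :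
    a ∈ memorylessRegion Q N ↔ 0 ≤ a ∧ ∃ π : ProbabilityMeasure (ℝ × ℝ),
      (π : Measure (ℝ × ℝ)).fst = gaussianReal 0 Q ∧
      ∫⁻ q, ENNReal.ofReal (q.2 ^ 2) ∂(π : Measure (ℝ × ℝ)) ≤ ENNReal.ofReal a.1 ∧
      mmse N ((π : Measure (ℝ × ℝ)).map fun q => q.1 + q.2) ≤ ENNReal.ofReal a.2 := by
  have hadd : Measurable fun q : ℝ × ℝ => q.1 + q.2 := by fun_prop
  constructor
  · intro ha
    obtain ⟨ρ, hρ, rfl⟩ := id ha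
    refine ⟨nonneg_of_mem_memorylessRegion _ ha, ⟨ρ.encLaw Q, inferInstance⟩, ρ.fst_encLaw Q,
      ?_, ?_⟩
    · rw [fst_integral hρ, ofReal_integral_eq_lintegral_ofReal hρ.fst
        (.of_forall fun q => (ρ.cost_nonneg q).1), ρ.lintegral_cost_fst]
      rfl
    · have := Measure.isProbabilityMeasure_map (μ := ρ.encLaw Q) hadd.aemeasurable
      rw [snd_integral hρ, ofReal_integral_eq_lintegral_ofReal hρ.snd
        (.of_forall fun q => (ρ.cost_nonneg q).2), ρ.lintegral_cost_snd]
      calc mmse N ((ρ.encLaw Q).map fun q => q.1 + q.2)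
          = ∫⁻ _, mmse N ((ρ.encLaw Q).map fun q => q.1 + q.2) ∂gaussianReal 0 1 := by
            rw [lintegral_const, measure_univ, mul_one]
        _ ≤ _ := lintegral_mono fun w => mmse_le_lintegral_sub_sq hN _
            (ρ.measurable_dec.of_uncurry_right (y := w))
  · rintro ⟨ha, π, hπ, hfst, hsnd⟩
    have := Measure.isProbabilityMeasure_map (μ := (π : Measure (ℝ × ℝ))) hadd.aemeasurable
    obtain ⟨ρ, hρ, hdec⟩ := exists_policy_encLaw_eq hπ
      (measurable_posteriorMean N ((π : Measure (ℝ × ℝ)).map fun q => q.1 + q.2))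
    refine mem_memorylessRegion_of_lintegral_le ρ ha ?_ ?_
    · rwa [ρ.lintegral_cost_fst, hρ]
    · rw [ρ.lintegral_cost_snd, hρ, hdec]
      rwa [lintegral_const, measure_univ, mul_one]

open Filter Topology in
lemma isTightMeasureSet_of_lintegral_norm_sq_le {E : Type*} [NormedAddCommGroup E] [ProperSpace E]
    [MeasurableSpace E] [OpensMeasurableSpace E] {S : Set (Measure E)} {C : ℝ≥0∞} (hC : C ≠ ∞)
    (hS : ∀ μ ∈ S, ∫⁻ x, ENNReal.ofReal (‖x‖ ^ 2) ∂μ ≤ C) : IsTightMeasureSet S := by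
  refine isTightMeasureSet_of_tendsto_measure_norm_gt ?_
  have hlim : Tendsto (fun r : ℝ => C / ENNReal.ofReal (r ^ 2)) atTop (𝓝 0) := by
    simpa using ENNReal.Tendsto.const_div
      (ENNReal.tendsto_ofReal_atTop.comp (tendsto_pow_atTop two_ne_zero)) (.inr hC)
  refine tendsto_of_tendsto_of_tendsto_of_le_of_le' tendsto_const_nhds hlim
    (.of_forall fun _ => zero_le) ?_
  filter_upwards [eventually_gt_atTop 0] with r hr
  refine iSup₂_le fun μ hμ => ?_
  calc μ {x | r < ‖x‖}
      ≤ μ {x | ENNReal.ofReal (r ^ 2) ≤ ENNReal.ofReal (‖x‖ ^ 2)} := measure_mono fun x hx =>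
        ENNReal.ofReal_le_ofReal (pow_le_pow_left₀ hr.le (le_of_lt hx) 2)
    _ ≤ (∫⁻ x, ENNReal.ofReal (‖x‖ ^ 2) ∂μ) / ENNReal.ofReal (r ^ 2) :=
        meas_ge_le_lintegral_div (by fun_prop) (by positivity) ENNReal.ofReal_ne_top
    _ ≤ C / ENNReal.ofReal (r ^ 2) := by gcongr; exact hS μ hμ

open Filter Topology in
lemma exists_tendsto_subseq_of_fst_eq_of_lintegral_sq_le {μ : Measure ℝ} [IsProbabilityMeasure μ]
    {C : ℝ≥0∞} (hC : C ≠ ∞) {π : ℕ → ProbabilityMeasure (ℝ × ℝ)}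
    (hfst : ∀ k, (π k : Measure (ℝ × ℝ)).fst = μ)
    (hsnd : ∀ k, ∫⁻ q, ENNReal.ofReal (q.2 ^ 2) ∂(π k : Measure (ℝ × ℝ)) ≤ C) :
    ∃ π₀ : ProbabilityMeasure (ℝ × ℝ), (π₀ : Measure (ℝ × ℝ)).fst = μ ∧
      ∃ φ : ℕ → ℕ, StrictMono φ ∧ Tendsto (π ∘ φ) atTop (𝓝 π₀) := by
  have htight : IsTightMeasureSet
      {((ν : ProbabilityMeasure (ℝ × ℝ)) : Measure (ℝ × ℝ)) | ν ∈ Set.range π} := by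
    refine IsTightMeasureSet.prodMk ?_ ?_
    · refine (isTightMeasureSet_singleton (μ := μ)).subset ?_
      rintro _ ⟨_, ⟨_, ⟨k, rfl⟩, rfl⟩, rfl⟩
      exact hfst k
    · refine isTightMeasureSet_of_lintegral_norm_sq_le hC ?_
      rintro _ ⟨_, ⟨_, ⟨k, rfl⟩, rfl⟩, rfl⟩
      rw [Measure.snd, lintegral_map (by fun_prop) measurable_snd]
      simpa only [Real.norm_eq_abs, sq_abs] using hsnd k
  obtain ⟨π₀, -, φ, hφ, hlim⟩ := (isCompact_closure_of_isTightMeasureSet htight).tendsto_subseq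
    (x := π) fun k => subset_closure ⟨k, rfl⟩
  refine ⟨π₀, ?_, φ, hφ, hlim⟩
  have hfst_lim := ProbabilityMeasure.tendsto_map_of_tendsto_of_continuous _ _ hlim
    (continuous_fst (X := ℝ) (Y := ℝ))
  have hconst : (fun k => ((π ∘ φ) k).map continuous_fst.measurable.aemeasurable) =
      fun _ => (⟨μ, inferInstance⟩ : ProbabilityMeasure ℝ) :=
    funext fun k => Subtype.ext (hfst (φ k))
  rw [hconst] at hfst_lim
  exact congrArg ProbabilityMeasure.toMeasure (tendsto_nhds_unique hfst_lim tendsto_const_nhds)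

open Filter Topology in
lemma isClosed_memorylessRegion (Q : ℝ≥0) {N : ℝ≥0} (hN : N ≠ 0) :
    IsClosed (memorylessRegion Q N) := by
  refine IsSeqClosed.isClosed fun a a₀ ha hlim => ?_
  choose ha0 π hfst hπ₁ hπ₂ using fun k => (mem_memorylessRegion_iff hN).1 (ha k)
  have hlim₁ : Tendsto (fun k => ENNReal.ofReal (a k).1) atTop (𝓝 (ENNReal.ofReal a₀.1)) :=
    (ENNReal.continuous_ofReal.tendsto _).comp ((continuous_fst.tendsto _).comp hlim)
  have hlim₂ : Tendsto (fun k => ENNReal.ofReal (a k).2) atTop (𝓝 (ENNReal.ofReal a₀.2)) :=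
    (ENNReal.continuous_ofReal.tendsto _).comp ((continuous_snd.tendsto _).comp hlim)
  obtain ⟨M, hM⟩ := hlim.bddAbove_range
  obtain ⟨π₀, hπ₀, φ, hφ, hπ_lim⟩ := exists_tendsto_subseq_of_fst_eq_of_lintegral_sq_le
    (ENNReal.ofReal_ne_top (r := M.1)) hfst
    fun k => (hπ₁ k).trans (ENNReal.ofReal_le_ofReal (hM ⟨k, rfl⟩).1)
  refine (mem_memorylessRegion_iff hN).2 ⟨ge_of_tendsto' hlim ha0, π₀, hπ₀, ?_, ?_⟩
  · calc ∫⁻ q, ENNReal.ofReal (q.2 ^ 2) ∂(π₀ : Measure (ℝ × ℝ))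
        ≤ liminf (fun k => ∫⁻ q, ENNReal.ofReal (q.2 ^ 2) ∂(π (φ k) : Measure (ℝ × ℝ))) atTop :=
          lintegral_le_liminf_lintegral_of_forall_isOpen_measure_le_liminf_measure
            (by fun_prop) (fun _ => sq_nonneg _)
            fun G hG => ProbabilityMeasure.le_liminf_measure_open_of_tendsto hπ_lim hG
      _ ≤ liminf (fun k => ENNReal.ofReal (a (φ k)).1) atTop :=
          liminf_le_liminf (.of_forall fun k => hπ₁ (φ k))
      _ = ENNReal.ofReal a₀.1 := (hlim₁.comp hφ.tendsto_atTop).liminf_eq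
  · have hadd : Continuous fun q : ℝ × ℝ => q.1 + q.2 := by fun_prop
    calc mmse N ((π₀ : Measure (ℝ × ℝ)).map fun q => q.1 + q.2)
        ≤ liminf (fun k => mmse N ((π (φ k) : Measure (ℝ × ℝ)).map fun q => q.1 + q.2)) atTop :=
          mmse_le_liminf hN
            (ProbabilityMeasure.tendsto_map_of_tendsto_of_continuous _ _ hπ_lim hadd)
      _ ≤ liminf (fun k => ENNReal.ofReal (a (φ k)).2) atTop :=
          liminf_le_liminf (.of_forall fun k => hπ₂ (φ k))
      _ = ENNReal.ofReal a₀.2 := (hlim₂.comp hφ.tendsto_atTop).liminf_eq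

/-! ### Closedness of the convexified region -/

lemma isClosed_convexHull_memorylessRegion (Q : ℝ≥0) {N : ℝ≥0} (hN : N ≠ 0) :
    IsClosed (convexHull ℝ (memorylessRegion Q N)) := by
  rw [convexHull_eq_convexJoin_self (isUpperSet_memorylessRegion Q N)]
  exact isClosed_convexJoin_self (isClosed_memorylessRegion Q hN)
    (isUpperSet_memorylessRegion Q N) nonneg_of_mem_memorylessRegion

lemma integral_cost_mem_convexHull_memorylessRegion {Q N : ℝ≥0} (hN : N ≠ 0) {Ω : Type*}
    [MeasurableSpace Ω] {μ : Measure Ω} [IsProbabilityMeasure μ] {ρ : Ω → Policy}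
    (hρ : Integrable (fun p : Ω × Letter => (ρ p.1).cost p.2) (μ.prod (letterLaw Q N))) :
    ∫ p, (ρ p.1).cost p.2 ∂μ.prod (letterLaw Q N) ∈ convexHull ℝ (memorylessRegion Q N) := by
  rw [integral_prod _ hρ]
  refine (convex_convexHull ℝ _).integral_mem (isClosed_convexHull_memorylessRegion Q hN) ?_
    hρ.integral_prod_left
  filter_upwards [hρ.prod_right_ae] with ω hω
  exact subset_convexHull ℝ _ ⟨ρ ω, hω, rfl⟩

/-! ### Designs as mixtures of memoryless policies -/

lemma measurePreserving_update {ι : Type*} [Fintype ι] [DecidableEq ι] {X : ι → Type*}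
    [∀ i, MeasurableSpace (X i)] (μ : ∀ i, Measure (X i)) [∀ i, IsProbabilityMeasure (μ i)]
    (i : ι) :
    MeasurePreserving (fun p : (∀ i, X i) × X i => Function.update p.1 i p.2)
      ((Measure.pi μ).prod (μ i)) (Measure.pi μ) := by
  have hupdate : Measurable fun p : (∀ i, X i) × X i => Function.update p.1 i p.2 :=
    measurable_update'
  refine ⟨hupdate, (Measure.ext_of_lintegral _ fun F hF => ?_).symm⟩
  rw [lintegral_map hF hupdate, lintegral_prod _ (by fun_prop)]
  have hG : Measurable fun ω => ∫⁻ q, F (Function.update ω i q) ∂μ i := by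
    rw [← lmarginal_singleton]; exact hF.lmarginal μ
  refine lintegral_eq_of_lmarginal_eq {i} hF hG ?_
  simp only [lmarginal_singleton, Function.update_idem, lintegral_const, measure_univ, mul_one]

/-- The sample assembled from the randomness of its individual channel uses. -/
def sampleOfLetters {n : ℕ} (q : Fin n → Letter) : Sample n :=
  (fun t => (q t).1, fun t => (q t).2.1, fun t => (q t).2.2.1, fun t => (q t).2.2.2)

lemma measurePreserving_sampleOfLetters (n : ℕ) (Q N : ℝ≥0) :
    MeasurePreserving (sampleOfLetters (n := n)) (Measure.pi fun _ => letterLaw Q N)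
      (base n Q N) := by
  have hVW := measurePreserving_arrowProdEquivProdArrow ℝ ℝ (Fin n)
    (fun _ => gaussianReal 0 1) (fun _ => gaussianReal 0 1)
  have hZ := measurePreserving_arrowProdEquivProdArrow ℝ (ℝ × ℝ) (Fin n)
    (fun _ => gaussianReal 0 N) (fun _ => (gaussianReal 0 1).prod (gaussianReal 0 1))
  have hX := measurePreserving_arrowProdEquivProdArrow ℝ (ℝ × ℝ × ℝ) (Fin n)
    (fun _ => gaussianReal 0 Q)
    (fun _ => (gaussianReal 0 N).prod ((gaussianReal 0 1).prod (gaussianReal 0 1)))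
  exact ((MeasurePreserving.id _).prod (((MeasurePreserving.id _).prod hVW).comp hZ)).comp hX

namespace Design

variable {n : ℕ} (c : Design n)

@[fun_prop]
lemma measurable_U1 : Measurable c.U1 :=
  measurable_pi_lambda _ fun t => (c.enc_meas t).comp
    (by fun_prop : Measurable fun ω : Sample n => (ω.1, ω.2.2.1 t))

@[fun_prop]
lemma measurable_X1 : Measurable c.X1 := by
  unfold X1 srcX0; fun_prop

@[fun_prop]
lemma measurable_Y1 : Measurable c.Y1 := by
  unfold Y1 noiseZ; fun_prop

@[fun_prop]
lemma measurable_U2 : Measurable c.U2 :=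
  measurable_pi_lambda _ fun t => (c.dec_meas t).comp
    (by fun_prop : Measurable fun ω : Sample n => (c.Y1 ω, ω.2.2.2 t))

/-- The pair of costs incurred at time `t`. -/
def stageCost (t : Fin n) (ω : Sample n) : ℝ × ℝ :=
  (c.U1 ω t ^ 2, (c.X1 ω t - c.U2 ω t) ^ 2)

/-- The pair of costs incurred over the whole block. -/
def blockCost (ω : Sample n) : ℝ × ℝ := (costP (c.U1 ω), costS (c.X1 ω) (c.U2 ω))

@[fun_prop]
lemma measurable_stageCost (t : Fin n) : Measurable (c.stageCost t) := by
  unfold stageCost; fun_prop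

@[fun_prop]
lemma measurable_blockCost : Measurable c.blockCost := by
  unfold blockCost costP costS; fun_prop

lemma stageCost_nonneg (t : Fin n) (ω : Sample n) : 0 ≤ c.stageCost t ω :=
  ⟨sq_nonneg _, sq_nonneg _⟩

lemma blockCost_eq_smul_sum (ω : Sample n) :
    c.blockCost ω = (n : ℝ)⁻¹ • ∑ t, c.stageCost t ω := by
  simp [blockCost, costP, costS, stageCost, Prod.ext_iff, Prod.fst_sum, Prod.snd_sum]

/-- The policy a design follows at time `t`, the randomness of the other times being frozen to
that of `ω`. -/
def policyAt (t : Fin n) (ω : Sample n) : Policy where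
  enc x v := c.enc t (Function.update (srcX0 ω) t x) v
  dec y w := c.dec t (Function.update (c.Y1 ω) t y) w
  measurable_enc := (c.enc_meas t).comp
    (((measurable_update (srcX0 ω)).comp measurable_fst).prodMk measurable_snd)
  measurable_dec := (c.dec_meas t).comp
    (((measurable_update (c.Y1 ω)).comp measurable_fst).prodMk measurable_snd)

variable (t : Fin n) (ω : Fin n → Letter) (q : Letter)

lemma srcX0_update : srcX0 (sampleOfLetters (Function.update ω t q)) =
    Function.update (srcX0 (sampleOfLetters ω)) t q.1 :=
  funext fun s => Function.apply_update (fun _ => Prod.fst) ω t q s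

lemma U1_update : c.U1 (sampleOfLetters (Function.update ω t q)) t =
    (c.policyAt t (sampleOfLetters ω)).control q := by
  rw [U1, srcX0_update]
  simp [seedV, sampleOfLetters, policyAt, Policy.control]

lemma X1_update : c.X1 (sampleOfLetters (Function.update ω t q)) t =
    (c.policyAt t (sampleOfLetters ω)).state q := by
  rw [X1, U1_update, srcX0_update, Function.update_self, Policy.state]

lemma Y1_update_of_lt {s : Fin n} (hs : s < t) :
    c.Y1 (sampleOfLetters (Function.update ω t q)) s = c.Y1 (sampleOfLetters ω) s := by
  have hletter : Function.update ω t q s = ω s := Function.update_of_ne hs.ne _ _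
  have henc (v : ℝ) : c.enc s (srcX0 (sampleOfLetters (Function.update ω t q))) v =
      c.enc s (srcX0 (sampleOfLetters ω)) v := by
    rw [srcX0_update]
    exact c.enc_causal s _ _ v fun r hr => Function.update_of_ne (hr.trans_lt hs).ne _ _
  simp only [Y1, X1, U1, henc]
  simp only [srcX0, noiseZ, seedV, sampleOfLetters, hletter]

lemma U2_update : c.U2 (sampleOfLetters (Function.update ω t q)) t =
    (c.policyAt t (sampleOfLetters ω)).estimate q := by
  have hseed : seedW (sampleOfLetters (Function.update ω t q)) t = q.2.2.2 := by
    simp [seedW, sampleOfLetters]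
  rw [U2, hseed]
  refine c.dec_causal t _ _ _ fun s hs => ?_
  rcases hs.eq_or_lt with rfl | hs
  · rw [Y1, X1_update, Function.update_self]
    simp [noiseZ, sampleOfLetters]
  · rw [c.Y1_update_of_lt t ω q hs, Function.update_of_ne hs.ne]

lemma stageCost_update : c.stageCost t (sampleOfLetters (Function.update ω t q)) =
    (c.policyAt t (sampleOfLetters ω)).cost q := by
  rw [stageCost, U1_update, X1_update, U2_update, Policy.cost]

variable {Q N : ℝ≥0}

lemma integral_stageCost_mem_convexHull (hN : N ≠ 0)
    (hc : Integrable (c.stageCost t) (base n Q N)) :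
    ∫ ω, c.stageCost t ω ∂base n Q N ∈ convexHull ℝ (memorylessRegion Q N) := by
  have hresample := (measurePreserving_sampleOfLetters n Q N).comp
    (measurePreserving_update (fun _ => letterLaw Q N) t)
  have hcost := hresample.integrable_comp_of_integrable hc
  rw [← hresample.map_eq, integral_map hresample.aemeasurable (by fun_prop)]
  simp only [Function.comp_def, stageCost_update] at hcost ⊢
  exact integral_cost_mem_convexHull_memorylessRegion
    (ρ := fun ω => c.policyAt t (sampleOfLetters ω)) hN hcost

lemma integrable_stageCost (hc : Integrable c.blockCost (base n Q N)) :
    Integrable (c.stageCost t) (base n Q N) := by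
  refine (hc.smul (n : ℝ)).mono (by fun_prop) (.of_forall fun ω => ?_)
  have hn : (n : ℝ) ≠ 0 := Nat.cast_ne_zero.2 (Fin.pos t).ne'
  rw [Pi.smul_apply, blockCost_eq_smul_sum, smul_inv_smul₀ hn]
  have hle : c.stageCost t ω ≤ ∑ s, c.stageCost s ω :=
    Finset.single_le_sum (fun s _ => c.stageCost_nonneg s ω) (Finset.mem_univ t)
  have h0 := c.stageCost_nonneg t ω
  exact max_le_max (abs_le_abs_of_nonneg h0.1 hle.1) (abs_le_abs_of_nonneg h0.2 hle.2)

lemma integral_blockCost_mem_convexHull (hN : N ≠ 0) (hn : n ≠ 0)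
    (hc : Integrable c.blockCost (base n Q N)) :
    ∫ ω, c.blockCost ω ∂base n Q N ∈ convexHull ℝ (memorylessRegion Q N) := by
  have hstage (t : Fin n) := c.integrable_stageCost t hc
  simp_rw [blockCost_eq_smul_sum]
  rw [integral_smul, integral_finsetSum _ fun t _ => hstage t, Finset.smul_sum]
  refine (convex_convexHull ℝ _).sum_mem (fun _ _ => by positivity) ?_
    fun t _ => c.integral_stageCost_mem_convexHull t hN (hstage t)
  simp [hn]

end Design

lemma achievable_iff_forall_lintegral_enorm_le {Q N : ℝ≥0} {P S : ℝ} :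
    achievable Q N P S ↔ ∀ ε > 0, ∃ n₀ : ℕ, ∀ n ≥ n₀, ∃ c : Design n,
      ∫⁻ ω, ‖c.blockCost ω - (P, S)‖ₑ ∂base n Q N ≤ ENNReal.ofReal ε := by
  have hle (x y : ℝ × ℝ) : ‖y - x‖ₑ ≤ ENNReal.ofReal (|x.1 - y.1| + |x.2 - y.2|) := by
    rw [← ofReal_norm, norm_sub_rev]
    exact ENNReal.ofReal_le_ofReal (max_le_add_of_nonneg (abs_nonneg _) (abs_nonneg _))
  have hge (x y : ℝ × ℝ) : ENNReal.ofReal (|x.1 - y.1| + |x.2 - y.2|) ≤ 2 * ‖y - x‖ₑ := by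
    rw [ENNReal.ofReal_add (abs_nonneg _) (abs_nonneg _), two_mul, ← ofReal_norm, norm_sub_rev]
    exact add_le_add (ENNReal.ofReal_le_ofReal (norm_fst_le (x - y)))
      (ENNReal.ofReal_le_ofReal (norm_snd_le (x - y)))
  constructor
  · intro h ε hε
    obtain ⟨n₀, hn₀⟩ := h ε hε
    refine ⟨n₀, fun n hn => (hn₀ n hn).imp fun c hc => ?_⟩
    exact (lintegral_mono fun ω => hle (P, S) (c.blockCost ω)).trans hc
  · intro h ε hε
    obtain ⟨n₀, hn₀⟩ := h (ε / 2) (half_pos hε)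
    refine ⟨n₀, fun n hn => (hn₀ n hn).imp fun c hc => ?_⟩
    calc _ ≤ ∫⁻ ω, 2 * ‖c.blockCost ω - (P, S)‖ₑ ∂base n Q N :=
          lintegral_mono fun ω => hge (P, S) (c.blockCost ω)
      _ ≤ 2 * ENNReal.ofReal (ε / 2) := by
          rw [lintegral_const_mul _ (by fun_prop)]
          gcongr
      _ = ENNReal.ofReal ε := by
          rw [← ENNReal.ofReal_ofNat, ← ENNReal.ofReal_mul zero_le_two,
            mul_div_cancel₀ _ two_ne_zero]

lemma mem_convexHull_memorylessRegion_of_achievable {Q N : ℝ≥0} (hN : N ≠ 0) {P S : ℝ}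
    (h : achievable Q N P S) : (P, S) ∈ convexHull ℝ (memorylessRegion Q N) := by
  rw [achievable_iff_forall_lintegral_enorm_le] at h
  refine (isClosed_convexHull_memorylessRegion Q hN).closure_subset
    (EMetric.mem_closure_iff.2 fun δ hδ => ?_)
  obtain ⟨ε, -, hεδ⟩ := ENNReal.lt_iff_exists_real_btwn.1 hδ
  obtain ⟨n₀, hn₀⟩ := h ε (by simpa using hεδ.1)
  obtain ⟨c, hc⟩ := hn₀ (n₀ + 1) n₀.le_succ
  have hdev : Integrable (fun ω => c.blockCost ω - (P, S)) (base (n₀ + 1) Q N) :=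
    ⟨by fun_prop, hc.trans_lt ENNReal.ofReal_lt_top⟩
  have hint : Integrable c.blockCost (base (n₀ + 1) Q N) :=
    (hdev.add (integrable_const (P, S))).congr (.of_forall fun _ => sub_add_cancel _ _)
  refine ⟨_, c.integral_blockCost_mem_convexHull hN n₀.succ_ne_zero hint, ?_⟩
  calc edist (P, S) (∫ ω, c.blockCost ω ∂base (n₀ + 1) Q N)
      = ‖∫ ω, c.blockCost ω - (P, S) ∂base (n₀ + 1) Q N‖ₑ := by
        rw [integral_sub hint (integrable_const _), integral_const, probReal_univ, one_smul,
          edist_comm, edist_eq_enorm_sub]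
    _ ≤ ∫⁻ ω, ‖c.blockCost ω - (P, S)‖ₑ ∂base (n₀ + 1) Q N := enorm_integral_le_lintegral_enorm _
    _ ≤ ENNReal.ofReal ε := hc
    _ < δ := hεδ.2

/-! ### Single-letter decompositions -/

lemma measurePreserving_prodProdProdProdComm {α β γ δ ε : Type*} [MeasurableSpace α]
    [MeasurableSpace β] [MeasurableSpace γ] [MeasurableSpace δ] [MeasurableSpace ε]
    (μa : Measure α) (μb : Measure β) (μc : Measure γ) (μd : Measure δ) (μe : Measure ε)
    [SFinite μa] [SFinite μb] [SFinite μc] [SFinite μd] [SFinite μe] :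
    MeasurePreserving
      (fun p : α × β × γ × δ × ε => ((((p.2.1, p.1), p.2.2.2.1), p.2.2.1), p.2.2.2.2))
      (μa.prod (μb.prod (μc.prod (μd.prod μe)))) ((((μb.prod μa).prod μd).prod μc).prod μe) := by
  have hswap_cd := (measurePreserving_prodAssoc μd μc μe).comp
    ((Measure.measurePreserving_swap.prod (MeasurePreserving.id μe)).comp
      (measurePreserving_prodAssoc μc μd μe).symm)
  have hswap_ab := (Measure.measurePreserving_swap.prod hswap_cd).comp
    (measurePreserving_prodAssoc μa μb (μc.prod (μd.prod μe))).symm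
  exact (measurePreserving_prodAssoc ((μb.prod μa).prod μd) μc μe).symm.comp
    ((measurePreserving_prodAssoc (μb.prod μa) μd (μc.prod μe)).symm.comp hswap_ab)

lemma exists_kernel_eq_map {α β γ : Type*} [MeasurableSpace α] [MeasurableSpace β]
    [MeasurableSpace γ] (ν : Measure γ) [IsProbabilityMeasure ν] {f : α → γ → β}
    (hf : Measurable (Function.uncurry f)) :
    ∃ κ : Kernel α β, IsMarkovKernel κ ∧ ∀ a, κ a = ν.map (f a) := by
  refine ⟨(Kernel.id ×ₖ Kernel.const α ν).map (Function.uncurry f),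
    Kernel.IsMarkovKernel.map _ hf, fun a => ?_⟩
  rw [Kernel.map_apply _ hf, Kernel.prod_apply, Kernel.id_apply, Kernel.const_apply,
    Measure.dirac_prod, Measure.map_map hf measurable_prodMk_left]
  rfl

namespace SLDecomp

variable {Q N : ℝ≥0} {T : Type} [MeasurableSpace T]

/-- The conditional laws of `U₁` and `U₂` under the decomposition are those of the outputs of the
policies `ρ t`, `t` being the value of the time-sharing variable. -/
structure IsSimulatedBy (d : SLDecomp Q N T) (ρ : T → Policy) : Prop where
  measurable_enc : Measurable fun p : (ℝ × T) × ℝ => (ρ p.1.2).enc p.1.1 p.2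
  measurable_dec : Measurable fun p : (T × ℝ) × ℝ => (ρ p.1.1).dec p.1.2 p.2
  map_enc : ∀ p, (gaussianReal 0 1).map ((ρ p.2).enc p.1) = d.κ1 p
  map_dec : ∀ p, (gaussianReal 0 1).map ((ρ p.1).dec p.2) = d.κ2 p

lemma exists_isSimulatedBy (d : SLDecomp Q N T) : ∃ ρ, d.IsSimulatedBy ρ := by
  obtain ⟨f, hf, hfκ⟩ := exists_gaussianReal_map_eq_kernel d.κ1
  obtain ⟨g, hg, hgκ⟩ := exists_gaussianReal_map_eq_kernel d.κ2
  exact ⟨fun t =>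
    { enc := fun x => f (x, t)
      dec := fun y => g (t, y)
      measurable_enc := hf.comp (by fun_prop : Measurable fun p : ℝ × ℝ => ((p.1, t), p.2))
      measurable_dec := hg.comp (by fun_prop : Measurable fun p : ℝ × ℝ => ((t, p.1), p.2)) },
    hf, hg, hfκ, hgκ⟩

lemma exists_isSimulatedBy_of_countable [Countable T] [MeasurableSingletonClass T] (μ : Measure T)
    [IsProbabilityMeasure μ] (ρ : T → Policy) :
    ∃ d : SLDecomp Q N T, d.μT = μ ∧ d.IsSimulatedBy ρ := by
  have henc : Measurable fun p : (ℝ × T) × ℝ => (ρ p.1.2).enc p.1.1 p.2 :=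
    (measurable_from_prod_countable_left (f := fun p : (ℝ × ℝ) × T => (ρ p.2).enc p.1.1 p.1.2)
      fun t => (ρ t).measurable_enc).comp
        (by fun_prop : Measurable fun p : (ℝ × T) × ℝ => ((p.1.1, p.2), p.1.2))
  have hdec : Measurable fun p : (T × ℝ) × ℝ => (ρ p.1.1).dec p.1.2 p.2 :=
    (measurable_from_prod_countable_right (f := fun p : T × ℝ × ℝ => (ρ p.1).dec p.2.1 p.2.2)
      fun t => (ρ t).measurable_dec).comp
        (by fun_prop : Measurable fun p : (T × ℝ) × ℝ => (p.1.1, p.1.2, p.2))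
  obtain ⟨κ1, hκ1, henc_law⟩ := exists_kernel_eq_map (gaussianReal 0 1)
    (f := fun p : ℝ × T => (ρ p.2).enc p.1) henc
  obtain ⟨κ2, hκ2, hdec_law⟩ := exists_kernel_eq_map (gaussianReal 0 1)
    (f := fun p : T × ℝ => (ρ p.1).dec p.2) hdec
  exact ⟨⟨μ, inferInstance, κ1, hκ1, κ2, hκ2⟩, rfl, henc, hdec, fun p => (henc_law p).symm,
    fun p => (hdec_law p).symm⟩

lemma IsSimulatedBy.measurePreserving {d : SLDecomp Q N T} {ρ : T → Policy}
    (h : d.IsSimulatedBy ρ) :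
    MeasurePreserving (fun p : T × Letter => ((((p.2.1, p.1), (ρ p.1).control p.2), p.2.2.1),
      (ρ p.1).estimate p.2)) (d.μT.prod (letterLaw Q N)) d.measure := by
  have henc : MeasurePreserving (fun p : (ℝ × T) × ℝ => (p.1, (ρ p.1.2).enc p.1.1 p.2))
      (((gaussianReal 0 Q).prod d.μT).prod (gaussianReal 0 1))
      (((gaussianReal 0 Q).prod d.μT) ⊗ₘ d.κ1) :=
    ⟨measurable_fst.prodMk h.measurable_enc, map_prodMk_eq_compProd h.measurable_enc h.map_enc⟩
  have hdec : Measurable fun p : (((ℝ × T) × ℝ) × ℝ) × ℝ =>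
      (ρ p.1.1.1.2).dec (p.1.1.1.1 + p.1.1.2 + p.1.2) p.2 :=
    h.measurable_dec.comp (by fun_prop : Measurable fun p : (((ℝ × T) × ℝ) × ℝ) × ℝ =>
      ((p.1.1.1.2, p.1.1.1.1 + p.1.1.2 + p.1.2), p.2))
  have hdec' : MeasurePreserving (fun p : (((ℝ × T) × ℝ) × ℝ) × ℝ =>
      (p.1, (ρ p.1.1.1.2).dec (p.1.1.1.1 + p.1.1.2 + p.1.2) p.2))
      (((((gaussianReal 0 Q).prod d.μT) ⊗ₘ d.κ1).prod (gaussianReal 0 N)).prod (gaussianReal 0 1))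
      d.measure :=
    ⟨measurable_fst.prodMk hdec, map_prodMk_eq_compProd (f := fun (p : ((ℝ × T) × ℝ) × ℝ) =>
      (ρ p.1.1.2).dec (p.1.1.1 + p.1.2 + p.2)) hdec fun _ => h.map_dec (_, _)⟩
  exact hdec'.comp (((henc.prod (MeasurePreserving.id _)).prod (MeasurePreserving.id _)).comp
    (measurePreserving_prodProdProdProdComm _ _ _ _ _))

/-- The pair of single-letter costs. -/
def cost (q : Space T) : ℝ × ℝ := (sU1 q ^ 2, (sX1 q - sU2 q) ^ 2)

lemma measurable_cost : Measurable (cost (T := T)) := by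
  unfold cost sX1 sX0 sU1 sU2; fun_prop

lemma realizes_iff {d : SLDecomp Q N T} {P S : ℝ} :
    d.realizes P S ↔ Integrable cost d.measure ∧ ∫ q, cost q ∂d.measure = (P, S) := by
  constructor
  · rintro ⟨hP, hS, rfl, rfl⟩
    exact ⟨hP.prodMk hS, integral_pair hP hS⟩
  · rintro ⟨hcost, h⟩
    exact ⟨hcost.fst, hcost.snd, (congrArg Prod.fst h).symm.trans (fst_integral hcost),
      (congrArg Prod.snd h).symm.trans (snd_integral hcost)⟩

lemma IsSimulatedBy.realizes_iff {d : SLDecomp Q N T} {ρ : T → Policy} (h : d.IsSimulatedBy ρ)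
    {P S : ℝ} :
    d.realizes P S ↔
      Integrable (fun p : T × Letter => (ρ p.1).cost p.2) (d.μT.prod (letterLaw Q N)) ∧
        ∫ p, (ρ p.1).cost p.2 ∂d.μT.prod (letterLaw Q N) = (P, S) := by
  rw [SLDecomp.realizes_iff, ← h.measurePreserving.integrable_comp
    measurable_cost.aestronglyMeasurable, ← h.measurePreserving.map_eq,
    integral_map h.measurePreserving.aemeasurable measurable_cost.aestronglyMeasurable]
  rfl

lemma mem_convexHull_memorylessRegion_of_realizes (hN : N ≠ 0) {d : SLDecomp Q N T} {P S : ℝ}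
    (hd : d.realizes P S) : (P, S) ∈ convexHull ℝ (memorylessRegion Q N) := by
  obtain ⟨ρ, hρ⟩ := d.exists_isSimulatedBy
  obtain ⟨hint, heq⟩ := hρ.realizes_iff.1 hd
  exact heq ▸ integral_cost_mem_convexHull_memorylessRegion hN hint

end SLDecomp

open SLDecomp in
lemma exists_realizes_of_mem_convexHull_memorylessRegion {Q N : ℝ≥0} {P S : ℝ}
    (h : (P, S) ∈ convexHull ℝ (memorylessRegion Q N)) :
    ∃ d : SLDecomp Q N Bool, d.realizes P S := by
  rw [convexHull_eq_convexJoin_self (isUpperSet_memorylessRegion Q N)] at h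
  obtain ⟨_, ⟨ρ₁, hρ₁, rfl⟩, _, ⟨ρ₂, hρ₂, rfl⟩, r, hr, hPS, -⟩ :=
    exists_smul_add_smul_of_mem_convexJoin_self nonneg_of_mem_memorylessRegion h
  obtain ⟨d, hμ, hd⟩ := exists_isSimulatedBy_of_countable (Q := Q) (N := N)
    (bernoulliMeasure true false ⟨r, hr⟩) fun t => bif t then ρ₁ else ρ₂
  have hint : Integrable (fun p : Bool × Letter => (bif p.1 then ρ₁ else ρ₂).cost p.2)
      (d.μT.prod (letterLaw Q N)) := by
    refine (integrable_prod_iff (measurable_from_prod_countable_right fun t =>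
      (bif t then ρ₁ else ρ₂).measurable_cost).aestronglyMeasurable).2 ⟨.of_forall ?_, .of_finite⟩
    rintro (_ | _)
    exacts [hρ₂, hρ₁]
  refine ⟨d, hd.realizes_iff.2 ⟨hint, ?_⟩⟩
  rw [integral_prod _ hint, hμ, integral_bernoulliMeasure]
  exact hPS

/-! ### Time sharing -/

section LawOfLargeNumbers

open Filter Topology

variable {Ω E : Type*} [MeasurableSpace Ω] {ν : Measure Ω} [IsProbabilityMeasure ν]
  [NormedAddCommGroup E] [NormedSpace ℝ E] [MeasurableSpace E] [BorelSpace E]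
  [CompleteSpace E] {F A B : Ω → E}

lemma tendsto_lintegral_enorm_mean_sub (hF : Measurable F) (hFi : Integrable F ν) :
    Tendsto (fun n : ℕ => ∫⁻ ω, ‖(n : ℝ)⁻¹ • ∑ i ∈ Finset.range n, F (ω i) - ∫ q, F q ∂ν‖ₑ
      ∂Measure.infinitePi fun _ : ℕ => ν) atTop (𝓝 0) := by
  have hev (i : ℕ) := measurePreserving_eval_infinitePi (fun _ : ℕ => ν) i
  have hident (i : ℕ) : IdentDistrib (fun ω : ℕ → Ω => F (ω i)) F
      (Measure.infinitePi fun _ : ℕ => ν) ν :=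
    ⟨(hF.comp (measurable_pi_apply i)).aemeasurable, hF.aemeasurable, by
      conv_rhs => rw [← (hev i).map_eq]
      exact (Measure.map_map hF (measurable_pi_apply i)).symm⟩
  have hindep : iIndepFun (fun (i : ℕ) (ω : ℕ → Ω) => F (ω i))
      (Measure.infinitePi fun _ : ℕ => ν) :=
    iIndepFun_infinitePi (P := fun _ : ℕ => ν) (X := fun _ => F) fun _ => hF
  have hlim := strong_law_Lp le_rfl ENNReal.one_ne_top (fun (i : ℕ) (ω : ℕ → Ω) => F (ω i))
    (memLp_one_iff_integrable.2 ((hident 0).integrable_iff.2 hFi))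
    (fun i j hij => hindep.indepFun hij) fun i => (hident i).trans (hident 0).symm
  simpa only [(hident 0).integral_eq, eLpNorm_one_eq_lintegral_enorm] using hlim

variable [SecondCountableTopology E]

lemma tendsto_lintegral_enorm_partialMean_sub (hF : Measurable F) (hFi : Integrable F ν) {r : ℝ}
    (hr : 0 ≤ r) :
    Tendsto (fun n : ℕ => ∫⁻ ω, ‖(n : ℝ)⁻¹ • ∑ i ∈ Finset.range ⌊r * n⌋₊, F (ω i) -
      r • ∫ q, F q ∂ν‖ₑ ∂Measure.infinitePi fun _ : ℕ => ν) atTop (𝓝 0) := by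
  rcases hr.eq_or_lt with rfl | hr0
  · simp
  have hquot : Tendsto (fun n : ℕ => (⌊r * n⌋₊ : ℝ) / n) atTop (𝓝 r) :=
    (tendsto_nat_floor_mul_div_atTop hr).comp tendsto_natCast_atTop_atTop
  have hk : Tendsto (fun n : ℕ => ⌊r * n⌋₊) atTop atTop :=
    tendsto_nat_floor_atTop.comp (tendsto_natCast_atTop_atTop.const_mul_atTop hr0)
  set m := ∫ q, F q ∂ν
  have hmean : Tendsto (fun n : ℕ => ‖(⌊r * n⌋₊ : ℝ) / n‖ₑ *
      ∫⁻ ω, ‖(⌊r * n⌋₊ : ℝ)⁻¹ • ∑ i ∈ Finset.range ⌊r * n⌋₊, F (ω i) - m‖ₑ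
        ∂Measure.infinitePi fun _ : ℕ => ν) atTop (𝓝 0) := by
    simpa using ENNReal.Tendsto.mul hquot.enorm (.inr ENNReal.zero_ne_top)
      ((tendsto_lintegral_enorm_mean_sub hF hFi).comp hk) (.inr enorm_ne_top)
  have hconst : Tendsto (fun n : ℕ => ‖((⌊r * n⌋₊ : ℝ) / n - r) • m‖ₑ) atTop (𝓝 0) := by
    simpa using ((hquot.sub_const r).smul_const m).enorm
  refine tendsto_of_tendsto_of_tendsto_of_le_of_le tendsto_const_nhds
    (by simpa using hmean.add hconst) (fun _ => zero_le) fun n => ?_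
  dsimp only
  set k := ⌊r * n⌋₊
  have hsplit (ω : ℕ → Ω) : (n : ℝ)⁻¹ • ∑ i ∈ Finset.range k, F (ω i) - r • m =
      ((k : ℝ) / n) • ((k : ℝ)⁻¹ • ∑ i ∈ Finset.range k, F (ω i) - m) +
        ((k : ℝ) / n - r) • m := by
    rcases Nat.eq_zero_or_pos k with h0 | h0
    · simp [h0]
    · have hinv : (k : ℝ) / n * (k : ℝ)⁻¹ = (n : ℝ)⁻¹ := by field_simp
      rw [smul_sub, smul_smul, hinv]
      module
  calc ∫⁻ ω, ‖(n : ℝ)⁻¹ • ∑ i ∈ Finset.range k, F (ω i) - r • m‖ₑ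
        ∂(Measure.infinitePi fun _ : ℕ => ν)
      ≤ ∫⁻ ω, (‖(k : ℝ) / n‖ₑ * ‖(k : ℝ)⁻¹ • ∑ i ∈ Finset.range k, F (ω i) - m‖ₑ +
          ‖((k : ℝ) / n - r) • m‖ₑ) ∂(Measure.infinitePi fun _ : ℕ => ν) := by
        refine lintegral_mono fun ω => ?_
        rw [hsplit, ← enorm_smul]
        exact enorm_add_le _ _
    _ = _ := by
        rw [lintegral_add_right _ measurable_const, lintegral_const_mul _ (by fun_prop),
          lintegral_const, measure_univ, mul_one]

lemma tendsto_lintegral_enorm_sharedMean_sub (hA : Measurable A) (hB : Measurable B)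
    (hAi : Integrable A ν) (hBi : Integrable B ν) {r : ℝ} (hr : r ∈ Set.Icc (0 : ℝ) 1) :
    Tendsto (fun n : ℕ => ∫⁻ ω, ‖(n : ℝ)⁻¹ • ∑ t : Fin n,
      (if (t : ℕ) < ⌊r * n⌋₊ then A (ω t) else B (ω t)) -
        (r • ∫ q, A q ∂ν + (1 - r) • ∫ q, B q ∂ν)‖ₑ ∂Measure.pi fun _ : Fin n => ν)
      atTop (𝓝 0) := by
  have hAB := tendsto_lintegral_enorm_partialMean_sub (hA.sub hB) (hAi.sub hBi) hr.1
  have hB1 := tendsto_lintegral_enorm_partialMean_sub hB hBi zero_le_one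
  simp only [Pi.sub_apply, integral_sub hAi hBi] at hAB
  simp only [one_mul, one_smul, Nat.floor_natCast] at hB1
  refine tendsto_of_tendsto_of_tendsto_of_le_of_le tendsto_const_nhds
    (by simpa only [add_zero] using hAB.add hB1) (fun _ => zero_le) fun n => ?_
  dsimp only
  set k := ⌊r * n⌋₊
  have hkn : k ≤ n := Nat.floor_le_of_le (mul_le_of_le_one_left n.cast_nonneg hr.2)
  have hres : (Measure.infinitePi fun _ : ℕ => ν).map (fun ω (t : Fin n) => ω t) =
      Measure.pi fun _ : Fin n => ν := by
    rw [← Measure.infinitePi_eq_pi]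
    exact Measure.map_infinitePi_infinitePi_of_inj (P := fun _ : ℕ => ν) Fin.val_injective
  have hsum (ω : ℕ → Ω) : ∑ t : Fin n, (if (t : ℕ) < k then A (ω t) else B (ω t)) =
      ∑ i ∈ Finset.range k, (A (ω i) - B (ω i)) + ∑ i ∈ Finset.range n, B (ω i) := by
    rw [Fin.sum_univ_eq_sum_range fun i => if i < k then A (ω i) else B (ω i),
      ← Finset.sum_range_add_sum_Ico _ hkn, ← Finset.sum_range_add_sum_Ico (fun i => B (ω i)) hkn,
      Finset.sum_congr rfl fun i hi => if_pos (Finset.mem_range.1 hi),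
      Finset.sum_congr rfl fun i hi => if_neg (Finset.mem_Ico.1 hi).1.not_gt,
      Finset.sum_sub_distrib, ← add_assoc, sub_add_cancel]
  have hsplit (ω : ℕ → Ω) : (n : ℝ)⁻¹ • ∑ t : Fin n, (if (t : ℕ) < k then A (ω t) else B (ω t)) -
      (r • ∫ q, A q ∂ν + (1 - r) • ∫ q, B q ∂ν) =
      ((n : ℝ)⁻¹ • ∑ i ∈ Finset.range k, (A (ω i) - B (ω i)) -
        r • (∫ q, A q ∂ν - ∫ q, B q ∂ν)) +
      ((n : ℝ)⁻¹ • ∑ i ∈ Finset.range n, B (ω i) - ∫ q, B q ∂ν) := by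
    rw [hsum, smul_add, sub_smul, one_smul, smul_sub r]
    abel
  rw [← hres, lintegral_map ?_ (by fun_prop), ← lintegral_add_left (by fun_prop)]
  · refine lintegral_mono fun ω => ?_
    rw [hsplit]
    exact enorm_add_le _ _
  · refine (Measurable.sub_const ((Finset.measurable_sum _ fun t _ => ?_).const_smul _) _).enorm
    split_ifs <;> fun_prop

end LawOfLargeNumbers

namespace Policy

variable (ρ₁ ρ₂ : Policy)

/-- The design that follows the policy `ρ₁` before time `k` and `ρ₂` from then on. -/
def sharedDesign (n k : ℕ) : Design n where
  enc t x v := (if (t : ℕ) < k then ρ₁ else ρ₂).enc (x t) v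
  dec t y w := (if (t : ℕ) < k then ρ₁ else ρ₂).dec (y t) w
  enc_meas t := (if (t : ℕ) < k then ρ₁ else ρ₂).measurable_enc.comp
    (by fun_prop : Measurable fun p : Path n × ℝ => (p.1 t, p.2))
  dec_meas t := (if (t : ℕ) < k then ρ₁ else ρ₂).measurable_dec.comp
    (by fun_prop : Measurable fun p : Path n × ℝ => (p.1 t, p.2))
  enc_causal t x x' v h := by rw [h t le_rfl]
  dec_causal t y y' w h := by rw [h t le_rfl]

lemma blockCost_sharedDesign (n k : ℕ) (q : Fin n → Letter) :
    (ρ₁.sharedDesign ρ₂ n k).blockCost (sampleOfLetters q) =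
      (n : ℝ)⁻¹ • ∑ t : Fin n, if (t : ℕ) < k then ρ₁.cost (q t) else ρ₂.cost (q t) := by
  rw [Design.blockCost_eq_smul_sum]
  congr! 2 with t
  rw [← apply_ite (fun ρ : Policy => ρ.cost (q t))]
  rfl

end Policy

open Filter Topology in
lemma achievable_of_mem_convexHull_memorylessRegion {Q N : ℝ≥0} {P S : ℝ}
    (h : (P, S) ∈ convexHull ℝ (memorylessRegion Q N)) : achievable Q N P S := by
  rw [convexHull_eq_convexJoin_self (isUpperSet_memorylessRegion Q N)] at h
  obtain ⟨_, ⟨ρ₁, hρ₁, rfl⟩, _, ⟨ρ₂, hρ₂, rfl⟩, r, hr, hPS, -⟩ :=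
    exists_smul_add_smul_of_mem_convexJoin_self nonneg_of_mem_memorylessRegion h
  rw [achievable_iff_forall_lintegral_enorm_le]
  intro ε hε
  have hlim := tendsto_lintegral_enorm_sharedMean_sub ρ₁.measurable_cost ρ₂.measurable_cost
    hρ₁ hρ₂ hr
  obtain ⟨n₀, hn₀⟩ := eventually_atTop.1 (hlim.eventually_le_const (ENNReal.ofReal_pos.2 hε))
  refine ⟨n₀, fun n hn => ⟨ρ₁.sharedDesign ρ₂ n ⌊r * n⌋₊, ?_⟩⟩
  rw [← (measurePreserving_sampleOfLetters n Q N).lintegral_comp (by fun_prop)]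
  simpa only [Policy.blockCost_sharedDesign, hPS] using hn₀ n hn

/-- **Theorem 1** (causal encoding and causal decoding): the pair of Witsenhausen costs
`(P, S)` is achievable if and only if there exists a joint distribution of
`(X₀, T, U₁, X₁, Y₁, U₂)` decomposing according to
`P_{X₀} P_T P_{U₁|X₀,T} P_{X₁,Y₁|X₀,U₁} P_{U₂|T,Y₁}`, where the time-sharing variable `T`
takes values in a set of cardinality at most `2`, such that `P = E[U₁²]` and
`S = E[(X₁ - U₂)²]`. -/
theorem achievable_iff_exists_decomposition (Q N : ℝ≥0) (hQ : 0 < Q) (hN : 0 < N)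
    (P S : ℝ) :
    achievable Q N P S ↔
      ∃ (T : Type) (mT : MeasurableSpace T) (fT : Fintype T),
        Fintype.card T ≤ 2 ∧ ∃ d : SLDecomp Q N T, d.realizes P S := by
  constructor
  · intro h
    exact ⟨Bool, inferInstance, inferInstance, Fintype.card_bool.le,
      exists_realizes_of_mem_convexHull_memorylessRegion
        (mem_convexHull_memorylessRegion_of_achievable hN.ne' h)⟩
  · rintro ⟨T, _, -, -, d, hd⟩
    exact achievable_of_mem_convexHull_memorylessRegion
      (SLDecomp.mem_convexHull_memorylessRegion_of_realizes hN.ne' hd)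

end

end Witsenhausen
end

section
/- Cardinality bound for the time-sharing variable (Theorem 1): If a pair (P,S) satisfies P = E[U_1²] and S = E[(X_1 − U_2)²] for some joint distribution of (X_0, T, U_1, X_1, Y_1, U_2) decomposing as P_{X_0} P_T P_{U_1|X_0,T} P_{X_1,Y_1|X_0,U_1} P_{U_2|T,Y_1} with T taking values in an arbitrary finite set, then there exists a joint distribution of the same decomposed form, with a time-sharing variable T' taking values in a set of cardinality at most 2, such that P = E[U_1²] and S = E[(X_1 − U_2)²] under the new distribution. -/
/-!
Formalization of results from "Causal Vector-valued Witsenhausen Counterexamples with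
Feedback" (Zhao, Le Treust, Oechtering).

Stochastic encoders/decoders (stochastic kernels) are realized as measurable functions of
independent i.i.d. randomization seeds, which is equivalent to the kernel formulation on
standard Borel spaces.
-/

open MeasureTheory ProbabilityTheory
open scoped ENNReal NNReal

namespace Witsenhausen

noncomputable section

/-!
Given `T = t`, both costs are integrals against the law obtained by freezing `T`, so `(P, S)` is
the mean of the planar points `(E[U₁² | T = t], E[(X₁ - U₂)² | T = t])`. Two of these points, mixed
with suitable weights, have first coordinate exactly `P` and second coordinate at most `S`:
if the first coordinate is almost surely `P`, one point is enough; otherwise a failure would give a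
line through `(P, S)` lying weakly below all the points, hence passing through almost all of them,
and any two of these on opposite sides of `P` would mix to `(P, S)` itself. Time sharing
between the two corresponding values of `T` thus meets `P`, and independent noise added to `U₂`
makes up the missing part of `S`.
-/

section TwoPointMean

open unitInterval

theorem exists_mul_le_of_cross_le {ι : Type*} {x y : ι → ℝ} (hneg : ∃ i, x i < 0)
    (hpos : ∃ j, 0 < x j) (hzero : ∀ i, x i = 0 → 0 ≤ y i)
    (hcross : ∀ i j, x i < 0 → 0 < x j → x i * y j ≤ x j * y i) :
    ∃ c, ∀ i, c * x i ≤ y i := by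
  obtain ⟨i₀, hi₀⟩ := hneg
  obtain ⟨j₀, hj₀⟩ := hpos
  obtain ⟨c, hlower, hupper⟩ := exists_between_of_forall_le
    (s := (fun i => y i / x i) '' {i | x i < 0}) (t := (fun j => y j / x j) '' {j | 0 < x j})
    ⟨_, i₀, hi₀, rfl⟩ ⟨_, j₀, hj₀, rfl⟩ (by
      rintro _ ⟨i, hi, rfl⟩ _ ⟨j, hj, rfl⟩
      rw [div_le_iff_of_neg hi, div_mul_eq_mul_div, div_le_iff₀ hj]
      linarith [hcross i j hi hj])
  refine ⟨c, fun i => ?_⟩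
  rcases lt_trichotomy (x i) 0 with hi | hi | hi
  · exact (div_le_iff_of_neg hi).1 (hlower ⟨i, hi, rfl⟩)
  · simpa [hi] using hzero i hi
  · exact (le_div_iff₀ hi).1 (hupper ⟨i, hi, rfl⟩)

theorem exists_convexCombination_eq_zero_of_cross_le {x x' y y' : ℝ} (hx : x < 0) (hx' : 0 < x')
    (hcross : x' * y ≤ x * y') :
    ∃ r : I, r * x + (1 - r) * x' = 0 ∧ r * y + (1 - r) * y' ≤ 0 := by
  have hlen : 0 < x' - x := by linarith
  refine ⟨⟨x' / (x' - x), by positivity, (div_le_one hlen).2 (by linarith)⟩, ?_, ?_⟩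
  · field_simp
    ring
  · calc x' / (x' - x) * y + (1 - x' / (x' - x)) * y' = (x' * y - x * y') / (x' - x) := by
          field_simp
          ring
      _ ≤ 0 := div_nonpos_of_nonpos_of_nonneg (by linarith) hlen.le

variable {Ω : Type*} [MeasurableSpace Ω] {μ : Measure Ω}

theorem frequently_ae_lt_of_integral_eq {f g : Ω → ℝ} (hf : Integrable f μ) (hg : Integrable g μ)
    (hfg : ∫ t, f t ∂μ = ∫ t, g t ∂μ) (hne : ¬ g =ᵐ[μ] f) : ∃ᶠ t in ae μ, f t < g t := fun h =>
  hne ((integral_eq_iff_of_ae_le hg hf (h.mono fun _ => not_lt.1)).1 hfg.symm)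

variable [IsProbabilityMeasure μ] {G : Set Ω}

theorem exists_convexCombination_eq_zero_of_integral_eq_zero {x y : Ω → ℝ} (hx : Integrable x μ)
    (hy : Integrable y μ) (hx_mean : ∫ t, x t ∂μ = 0) (hy_mean : ∫ t, y t ∂μ = 0)
    (hG : ∀ᵐ t ∂μ, t ∈ G) :
    ∃ i ∈ G, ∃ j ∈ G, ∃ r : I, r * x i + (1 - r) * x j = 0 ∧ r * y i + (1 - r) * y j ≤ 0 := by
  by_contra! hcon
  have hzero : ∀ i ∈ G, x i = 0 → 0 < y i := fun i hi hxi => by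
    simpa using hcon i hi i hi 1 (by simpa using hxi)
  have hcross : ∀ i ∈ G, ∀ j ∈ G, x i < 0 → 0 < x j → x i * y j < x j * y i := by
    intro i hi j hj hxi hxj
    by_contra! hle
    obtain ⟨r, hrx, hry⟩ := exists_convexCombination_eq_zero_of_cross_le hxi hxj hle
    exact (hcon i hi j hj r hrx).not_ge hry
  have hx_ne : ¬ x =ᵐ[μ] 0 := fun hx_zero => by
    obtain ⟨t, ht, hyt⟩ := exists_notMem_null_le_integral hy (ae_iff.1 (hG.and hx_zero))
    obtain ⟨htG, hxt⟩ := not_not.1 ht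
    exact (hzero t htG hxt).not_ge (hy_mean ▸ hyt)
  have hneg : ∃ᶠ t in ae μ, x t < 0 :=
    frequently_ae_lt_of_integral_eq hx (integrable_zero _ _ _) (by simp [hx_mean])
      fun h => hx_ne h.symm
  have hpos : ∃ᶠ t in ae μ, 0 < x t :=
    frequently_ae_lt_of_integral_eq (integrable_zero _ _ _) hx (by simp [hx_mean]) hx_ne
  obtain ⟨c, hc⟩ : ∃ c, ∀ i : G, c * x i ≤ y i := by
    obtain ⟨i, hxi, hi⟩ := (hneg.and_eventually hG).exists
    obtain ⟨j, hxj, hj⟩ := (hpos.and_eventually hG).exists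
    exact exists_mul_le_of_cross_le ⟨⟨i, hi⟩, hxi⟩ ⟨⟨j, hj⟩, hxj⟩
      (fun t ht => (hzero t t.2 ht).le) fun s t hs ht => (hcross s s.2 t t.2 hs ht).le
  have hline : ∀ᵐ t ∂μ, c * x t = y t :=
    (integral_eq_iff_of_ae_le (hx.const_mul c) hy (hG.mono fun t ht => hc ⟨t, ht⟩)).1
      (by rw [integral_const_mul, hx_mean, hy_mean, mul_zero])
  obtain ⟨i, hxi, hyi, hi⟩ := (hneg.and_eventually (hline.and hG)).exists
  obtain ⟨j, hxj, hyj, hj⟩ := (hpos.and_eventually (hline.and hG)).exists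
  refine (hcross i hi j hj hxi hxj).ne ?_
  rw [← hyi, ← hyj]
  ring

theorem exists_convexCombination_eq_integral_and_le_integral {x y : Ω → ℝ} (hx : Integrable x μ)
    (hy : Integrable y μ) (hG : ∀ᵐ t ∂μ, t ∈ G) :
    ∃ i ∈ G, ∃ j ∈ G, ∃ r : I, r * x i + (1 - r) * x j = ∫ t, x t ∂μ ∧
      r * y i + (1 - r) * y j ≤ ∫ t, y t ∂μ := by
  obtain ⟨i, hi, j, hj, r, hrx, hry⟩ := exists_convexCombination_eq_zero_of_integral_eq_zero
    (hx.sub (integrable_const (∫ t, x t ∂μ))) (hy.sub (integrable_const (∫ t, y t ∂μ)))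
    (by simp [integral_sub hx]) (by simp [integral_sub hy]) hG
  simp only [Pi.sub_apply] at hrx hry
  exact ⟨i, hi, j, hj, r, by linarith, by linarith⟩

theorem lintegral_bernoulliMeasure {X : Type*} [MeasurableSpace X] [MeasurableSingletonClass X]
    (a b : X) (r : I) (f : X → ℝ≥0∞) :
    ∫⁻ t, f t ∂Ber(a, b, r) = toNNReal r * f a + toNNReal (σ r) * f b := by
  simp only [bernoulliMeasure_def, lintegral_add_measure, lintegral_smul_measure, lintegral_dirac,
    ENNReal.smul_def, smul_eq_mul]

theorem exists_bernoulliMeasure_lintegral_eq_and_le {x y : Ω → ℝ≥0∞} (hx : AEMeasurable x μ)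
    (hy : AEMeasurable y μ) (hx_fin : ∫⁻ t, x t ∂μ ≠ ∞) (hy_fin : ∫⁻ t, y t ∂μ ≠ ∞) :
    ∃ (f : Bool → Ω) (r : I), ∫⁻ b, x (f b) ∂Ber(true, false, r) = ∫⁻ t, x t ∂μ ∧
      ∫⁻ b, y (f b) ∂Ber(true, false, r) ≤ ∫⁻ t, y t ∂μ := by
  have hx_lt := ae_lt_top' hx hx_fin
  have hy_lt := ae_lt_top' hy hy_fin
  obtain ⟨i, ⟨hxi, hyi⟩, j, ⟨hxj, hyj⟩, r, hrx, hry⟩ :=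
    exists_convexCombination_eq_integral_and_le_integral
      (integrable_toReal_of_lintegral_ne_top hx hx_fin)
      (integrable_toReal_of_lintegral_ne_top hy hy_fin)
      (G := {t | x t < ∞ ∧ y t < ∞}) (hx_lt.and hy_lt)
  rw [integral_toReal hx hx_lt] at hrx
  rw [integral_toReal hy hy_lt] at hry
  have toReal_mix {a b : ℝ≥0∞} (ha : a < ∞) (hb : b < ∞) :
      (toNNReal r * a + toNNReal (σ r) * b).toReal = r * a.toReal + (1 - r) * b.toReal := by
    rw [ENNReal.toReal_add (by finiteness) (by finiteness)]
    simp
  refine ⟨fun b => if b then i else j, r, ?_, ?_⟩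
  · rw [lintegral_bernoulliMeasure, ← ENNReal.toReal_eq_toReal_iff' (by finiteness) hx_fin]
    exact (toReal_mix hxi hxj).trans hrx
  · rw [lintegral_bernoulliMeasure, ← ENNReal.toReal_le_toReal (by finiteness) hy_fin]
    exact (toReal_mix hyi hyj).trans_le hry

end TwoPointMean

theorem integrable_and_eq_integral_iff_lintegral {Ω : Type*} [MeasurableSpace Ω] {μ : Measure Ω}
    {f : Ω → ℝ} (hf : AEStronglyMeasurable f μ) (hf_nonneg : 0 ≤ᵐ[μ] f) {r : ℝ} :
    (Integrable f μ ∧ r = ∫ x, f x ∂μ) ↔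
      0 ≤ r ∧ ∫⁻ x, ENNReal.ofReal (f x) ∂μ = ENNReal.ofReal r := by
  constructor
  · rintro ⟨hi, rfl⟩
    exact ⟨integral_nonneg_of_ae hf_nonneg, (ofReal_integral_eq_lintegral_ofReal hi hf_nonneg).symm⟩
  · rintro ⟨hr, h⟩
    refine ⟨(lintegral_ofReal_ne_top_iff_integrable hf hf_nonneg).1 (h ▸ ENNReal.ofReal_ne_top), ?_⟩
    rw [integral_eq_lintegral_of_nonneg_ae hf_nonneg hf, h, ENNReal.toReal_ofReal hr]

theorem integral_sq_const_sub {ν : Measure ℝ} [IsProbabilityMeasure ν] (hν : MemLp id 2 ν)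
    (x : ℝ) : ∫ v, (x - v) ^ 2 ∂ν = Var[id; ν] + (x - ∫ v, v ∂ν) ^ 2 := by
  have hsub : MemLp (fun v => x - v) 2 ν := (memLp_const x).sub hν
  have hmean : ∫ v, (x - v) ∂ν = x - ∫ v, v ∂ν := by
    rw [integral_sub (integrable_const x) (g := fun v => v) (hν.integrable one_le_two)]
    simp
  have hvar : Var[id; ν] = ∫ v, (x - v) ^ 2 ∂ν - (x - ∫ v, v ∂ν) ^ 2 := by
    rw [← variance_const_sub hν.1 x, ← hmean]
    exact variance_eq_sub hsub
  linarith

theorem lintegral_sq_const_sub_gaussianReal (x : ℝ) (c : ℝ≥0) :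
    ∫⁻ v, ENNReal.ofReal ((x - v) ^ 2) ∂gaussianReal 0 c = ENNReal.ofReal (x ^ 2) + c := by
  have hid : MemLp id 2 (gaussianReal 0 c) := memLp_id_gaussianReal 2
  have hsub : MemLp (fun v => x - v) 2 (gaussianReal 0 c) := (memLp_const x).sub hid
  rw [← ofReal_integral_eq_lintegral_ofReal hsub.integrable_sq
    (ae_of_all _ fun _ => sq_nonneg _), integral_sq_const_sub hid]
  simp [add_comm, ENNReal.ofReal_add, sq_nonneg]

namespace SLDecomp

variable {Q N : ℝ≥0} {T T' : Type} [MeasurableSpace T] [MeasurableSpace T']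

/-- The kernel `P_{U₂|T,Y₁}` as a kernel from the coordinates `(((X₀, T), U₁), Z₁)`, through
`Y₁ = X₀ + U₁ + Z₁`; it is the last factor of `SLDecomp.measure`. -/
def decoder (d : SLDecomp Q N T) : Kernel (((ℝ × T) × ℝ) × ℝ) ℝ :=
  d.κ2.comap (fun q => (q.1.1.2, q.1.1.1 + q.1.2 + q.2)) (by fun_prop)

instance (d : SLDecomp Q N T) : IsMarkovKernel d.decoder := by
  unfold decoder; infer_instance

/-- The conditional expectation `E[f | T = t]`, in the version that integrates `f` against the
kernels of `d` with `T` frozen at `t`. -/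
def condLIntegral (d : SLDecomp Q N T) (f : Space T → ℝ≥0∞) (t : T) : ℝ≥0∞ :=
  ∫⁻ x, ∫⁻ u, ∫⁻ z, ∫⁻ w, f ((((x, t), u), z), w)
    ∂d.decoder (((x, t), u), z) ∂gaussianReal 0 N ∂d.κ1 (x, t) ∂gaussianReal 0 Q

theorem measurable_condLIntegral (d : SLDecomp Q N T) {f : Space T → ℝ≥0∞} (hf : Measurable f) :
    Measurable (d.condLIntegral f) :=
  (hf.lintegral_kernel_prod_right' (κ := d.decoder)).lintegral_prod_right'
    |>.lintegral_kernel_prod_right' |>.lintegral_prod_left'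

theorem lintegral_measure (d : SLDecomp Q N T) {f : Space T → ℝ≥0∞} (hf : Measurable f) :
    ∫⁻ q, f q ∂d.measure = ∫⁻ t, d.condLIntegral f t ∂d.μT := by
  have hw : Measurable fun q => ∫⁻ w, f (q, w) ∂d.decoder q := hf.lintegral_kernel_prod_right'
  have hz : Measurable fun r => ∫⁻ z, ∫⁻ w, f ((r, z), w) ∂d.decoder (r, z) ∂gaussianReal 0 N :=
    hw.lintegral_prod_right'
  have hu : Measurable fun a => ∫⁻ u, ∫⁻ z, ∫⁻ w, f (((a, u), z), w) ∂d.decoder ((a, u), z)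
      ∂gaussianReal 0 N ∂d.κ1 a := hz.lintegral_kernel_prod_right'
  change ∫⁻ q, f q ∂((((gaussianReal 0 Q).prod d.μT) ⊗ₘ d.κ1).prod (gaussianReal 0 N) ⊗ₘ
    d.decoder) = _
  rw [Measure.lintegral_compProd hf, lintegral_prod _ hw.aemeasurable,
    Measure.lintegral_compProd hz, lintegral_prod_symm _ hu.aemeasurable]
  rfl

/-- The conditional power cost `E[U₁² | T = t]`. -/
def powerCost (d : SLDecomp Q N T) : T → ℝ≥0∞ :=
  d.condLIntegral fun q => ENNReal.ofReal (sU1 q ^ 2)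

/-- The conditional estimation cost `E[(X₁ - U₂)² | T = t]`. -/
def estimationCost (d : SLDecomp Q N T) : T → ℝ≥0∞ :=
  d.condLIntegral fun q => ENNReal.ofReal ((sX1 q - sU2 q) ^ 2)

theorem measurable_sq_sU1 : Measurable fun q : Space T => sU1 q ^ 2 := by
  unfold sU1; fun_prop

theorem measurable_sq_sX1_sub_sU2 : Measurable fun q : Space T => (sX1 q - sU2 q) ^ 2 := by
  unfold sX1 sX0 sU1 sU2; fun_prop

theorem measurable_powerCost (d : SLDecomp Q N T) : Measurable d.powerCost :=
  d.measurable_condLIntegral measurable_sq_sU1.ennreal_ofReal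

theorem measurable_estimationCost (d : SLDecomp Q N T) : Measurable d.estimationCost :=
  d.measurable_condLIntegral measurable_sq_sX1_sub_sU2.ennreal_ofReal

theorem realizes_iff_s3 (d : SLDecomp Q N T) {P S : ℝ} :
    d.realizes P S ↔
      (0 ≤ P ∧ ∫⁻ t, d.powerCost t ∂d.μT = ENNReal.ofReal P) ∧
      (0 ≤ S ∧ ∫⁻ t, d.estimationCost t ∂d.μT = ENNReal.ofReal S) := by
  unfold powerCost estimationCost
  rw [← d.lintegral_measure measurable_sq_sU1.ennreal_ofReal,
    ← d.lintegral_measure measurable_sq_sX1_sub_sU2.ennreal_ofReal,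
    ← integrable_and_eq_integral_iff_lintegral measurable_sq_sU1.aestronglyMeasurable
      (ae_of_all _ fun _ => sq_nonneg _),
    ← integrable_and_eq_integral_iff_lintegral measurable_sq_sX1_sub_sU2.aestronglyMeasurable
      (ae_of_all _ fun _ => sq_nonneg _)]
  unfold realizes
  tauto

/-- Time sharing along `f`: the time-sharing variable becomes a `T'` of law `ν`, and the kernels of
`d` are used at the value `f T'`. -/
def reindex (d : SLDecomp Q N T) {f : T' → T} (hf : Measurable f) (ν : Measure T')
    [IsProbabilityMeasure ν] : SLDecomp Q N T' where
  μT := ν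
  probT := inferInstance
  κ1 := d.κ1.comap (Prod.map id f) (by fun_prop)
  markov1 := inferInstance
  κ2 := d.κ2.comap (Prod.map f id) (by fun_prop)
  markov2 := inferInstance

section Reindex

variable (d : SLDecomp Q N T) {f : T' → T} (hf : Measurable f) (ν : Measure T')
  [IsProbabilityMeasure ν]

theorem lintegral_powerCost_reindex :
    ∫⁻ t, (d.reindex hf ν).powerCost t ∂(d.reindex hf ν).μT = ∫⁻ t, d.powerCost (f t) ∂ν := rfl

theorem lintegral_estimationCost_reindex :
    ∫⁻ t, (d.reindex hf ν).estimationCost t ∂(d.reindex hf ν).μT =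
      ∫⁻ t, d.estimationCost (f t) ∂ν := rfl

end Reindex

/-- The decomposition in which the output `U₂` is replaced by `U₂ + W`, with `W ~ N(0,c)`
independent of everything else. -/
def addNoise (d : SLDecomp Q N T) (c : ℝ≥0) : SLDecomp Q N T where
  μT := d.μT
  probT := inferInstance
  κ1 := d.κ1
  markov1 := inferInstance
  κ2 := (d.κ2 ×ₖ Kernel.const _ (gaussianReal 0 c)).map fun w : ℝ × ℝ => w.1 + w.2
  markov2 := Kernel.IsMarkovKernel.map _ (by fun_prop)

section AddNoise

variable (d : SLDecomp Q N T) (c : ℝ≥0)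

theorem lintegral_decoder_addNoise (q : ((ℝ × T) × ℝ) × ℝ) {f : ℝ → ℝ≥0∞} (hf : Measurable f) :
    ∫⁻ w, f w ∂(d.addNoise c).decoder q =
      ∫⁻ w, ∫⁻ v, f (w + v) ∂gaussianReal 0 c ∂d.decoder q := by
  change ∫⁻ w, f w ∂((d.κ2 ×ₖ Kernel.const _ (gaussianReal 0 c)).map
    fun w : ℝ × ℝ => w.1 + w.2) (q.1.1.2, q.1.1.1 + q.1.2 + q.2) = _
  rw [Kernel.lintegral_map _ (by fun_prop) _ hf, Kernel.prod_apply,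
    lintegral_prod _ (by fun_prop)]
  rfl

theorem powerCost_addNoise (t : T) : (d.addNoise c).powerCost t = d.powerCost t := by
  simp only [powerCost, condLIntegral, sU1, lintegral_const, measure_univ, mul_one]
  rfl

theorem estimationCost_addNoise (t : T) :
    (d.addNoise c).estimationCost t = d.estimationCost t + c := by
  have hdecoder (a : ℝ) (q : ((ℝ × T) × ℝ) × ℝ) :
      ∫⁻ w, ENNReal.ofReal ((a - w) ^ 2) ∂(d.addNoise c).decoder q =
        ∫⁻ w, ENNReal.ofReal ((a - w) ^ 2) ∂d.decoder q + c := by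
    rw [lintegral_decoder_addNoise _ _ _ (by fun_prop)]
    simp only [← sub_sub, lintegral_sq_const_sub_gaussianReal]
    rw [lintegral_add_right _ measurable_const]
    simp
  simp only [estimationCost, condLIntegral, sX1, sX0, sU1, sU2, hdecoder,
    lintegral_add_right _ measurable_const, lintegral_const, measure_univ, mul_one]
  rfl

theorem lintegral_powerCost_addNoise :
    ∫⁻ t, (d.addNoise c).powerCost t ∂(d.addNoise c).μT = ∫⁻ t, d.powerCost t ∂d.μT :=
  lintegral_congr (d.powerCost_addNoise c)

theorem lintegral_estimationCost_addNoise :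
    ∫⁻ t, (d.addNoise c).estimationCost t ∂(d.addNoise c).μT =
      ∫⁻ t, d.estimationCost t ∂d.μT + c := by
  simp only [estimationCost_addNoise, lintegral_add_right _ measurable_const, lintegral_const,
    measure_univ, mul_one]
  rfl

end AddNoise

end SLDecomp

theorem timeSharing_cardinality_bound_general {Q N : ℝ≥0} {T : Type} [MeasurableSpace T]
    (d : SLDecomp Q N T) {P S : ℝ} (h : d.realizes P S) :
    ∃ d' : SLDecomp Q N Bool, d'.realizes P S := by
  obtain ⟨⟨hP, hdP⟩, hS, hdS⟩ := d.realizes_iff_s3.1 h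
  obtain ⟨f, r, hpower, hestimation⟩ := exists_bernoulliMeasure_lintegral_eq_and_le
    d.measurable_powerCost.aemeasurable d.measurable_estimationCost.aemeasurable
    (hdP ▸ ENNReal.ofReal_ne_top) (hdS ▸ ENNReal.ofReal_ne_top)
  rw [hdP] at hpower
  rw [hdS] at hestimation
  obtain ⟨c, hc⟩ := exists_add_of_le hestimation
  lift c to ℝ≥0 using fun hc_top => by simp [hc_top] at hc
  refine ⟨(d.reindex (measurable_of_finite f) Ber(true, false, r)).addNoise c,
    (SLDecomp.realizes_iff_s3 _).2 ⟨⟨hP, ?_⟩, hS, ?_⟩⟩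
  · rw [SLDecomp.lintegral_powerCost_addNoise, SLDecomp.lintegral_powerCost_reindex, hpower]
  · rw [SLDecomp.lintegral_estimationCost_addNoise, SLDecomp.lintegral_estimationCost_reindex, hc]

/-- **Cardinality bound for the time-sharing variable** (Theorem 1): if `(P, S)` is realized
by a decomposed joint distribution of `(X₀, T, U₁, X₁, Y₁, U₂)` whose time-sharing variable
`T` takes values in an arbitrary finite set, then `(P, S)` is also realized by a decomposed
joint distribution whose time-sharing variable takes values in a set of cardinality at
most `2`. -/
theorem timeSharing_cardinality_bound (Q N : ℝ≥0) (hQ : 0 < Q) (hN : 0 < N)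
    (T : Type) [MeasurableSpace T] [Fintype T] (d : SLDecomp Q N T)
    (P S : ℝ) (h : d.realizes P S) :
    ∃ (T' : Type) (mT' : MeasurableSpace T') (fT' : Fintype T'),
      Fintype.card T' ≤ 2 ∧ ∃ d' : SLDecomp Q N T', d'.realizes P S := by
  obtain ⟨d', hd'⟩ := timeSharing_cardinality_bound_general d h
  exact ⟨Bool, inferInstance, inferInstance, by simp, d', hd'⟩

end

end Witsenhausen
end
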